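/- Let ρ^{ABCD} be a state of a quadripartite quantum system on finite-dimensional Hilbert spaces satisfying S(B|A) + S(B|CD) = 0, S(A|B) + S(A|CD) = 0 and I(A;B|D) = 0. Then S(D) + S(CD) ≥ S(AB) + S(ABC). -/

import Mathlib

/-!
Let `E` purify `ρ`. Complementary marginals of a pure state have equal entropy, so the hypotheses
read `I(B;E|A) = 0`, `I(A;E|B) = 0` and `I(A;B|D) = 0`, and the claim becomes
`S(DE) + S(A) ≤ S(D) + S(AE)` (`four_party`).

Strong subadditivity is needed together with the structure of its equality case. For a state
`τ` of `ABC` and `θ = Tr_C τ ⊗ 1`, the concave functional `quadF τ θ t` has a supremum `Q t` whose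
primitive `Phi` interpolates between `Tr τ log θ` at `t = 0` and `Tr τ log τ` (up to a term
`Tr τ · log t`) at infinity. Restricting `quadF` to operators that act trivially on `B` gives the
functional of the `B`-reduced pair, so `Q` decreases under partial trace; integrating over `t`
gives `ssa`. If equality holds, then the suprema agree for every `t > 0`, and the maximizer of the
reduced problem solves the stationarity equation `θ Y + t Y τ = τ` of the full one
(`exists_stationary`). The solutions are `(t + L_θ R_τ⁻¹)⁻¹` applied to `1`; interpolating
`x ^ (-1/2)` by resolvents yields an operator on `A ⊗ C` carrying the square root of `θ` to that
of `τ`, which gives `eq_structure`.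

The two conditions `I(B;E|A) = I(A;E|B) = 0` together (`double_markov`) give commuting operators
`t i j` on `A` and `t' i j` on `B` that act equally on `ρ_AB`, such that the `(i, j)` block of
`ρ_AE` is `ρ_A * t i j`. Their joint eigenvalues are labels `J` that can be measured on `A` as well
as on `B`, always with the same outcome (`label_corr`, `lift_corr`). The inequality is then the sum
of four facts about `J`:

* recording `J` and using `I(A;B|D) = 0` and the fact that `B` determines `J`, one has
  `S(JD) ≤ S(D)` (`ssa_isplit`, `ent_meas_of_corr`);
* `S(DE) ≤ S(JDE)`, because `J` is classical (`ent_le_meas`);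
* `S(JDE) + S(J) ≤ S(JD) + S(JE)` (`ssa_meas`);
* `S(JE) - S(J) = S(AE) - S(A)`, because `J` determines the state of `E` (`ent_meas_label`).
-/

open scoped BigOperators ComplexOrder

/-- Von Neumann entropy (base 2) of a matrix: for a Hermitian matrix, the Shannon
entropy of its eigenvalues; junk value `0` for non-Hermitian matrices. -/
noncomputable def vNEntropy {n : Type*} [Fintype n] [DecidableEq n] (M : Matrix n n ℂ) : ℝ :=
  if h : M.IsHermitian then -∑ i, (h.eigenvalues i) * Real.logb 2 (h.eigenvalues i) else 0

/-- A density matrix: positive semidefinite with trace one. -/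
def IsState {n : Type*} [Fintype n] [DecidableEq n] (M : Matrix n n ℂ) : Prop :=
  M.PosSemidef ∧ M.trace = 1

section Quad

variable {A B C D : Type*} [Fintype A] [DecidableEq A] [Fintype B] [DecidableEq B]
  [Fintype C] [DecidableEq C] [Fintype D] [DecidableEq D]
  (ρ : Matrix (A × B × C × D) (A × B × C × D) ℂ)

/-- Entropies of the 15 marginals of a quadripartite state. -/
noncomputable def SA : ℝ :=
  vNEntropy (Matrix.of fun a a' : A => ∑ b, ∑ c, ∑ d, ρ (a, b, c, d) (a', b, c, d))
noncomputable def SB : ℝ :=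
  vNEntropy (Matrix.of fun b b' : B => ∑ a, ∑ c, ∑ d, ρ (a, b, c, d) (a, b', c, d))
noncomputable def SC : ℝ :=
  vNEntropy (Matrix.of fun c c' : C => ∑ a, ∑ b, ∑ d, ρ (a, b, c, d) (a, b, c', d))
noncomputable def SD : ℝ :=
  vNEntropy (Matrix.of fun d d' : D => ∑ a, ∑ b, ∑ c, ρ (a, b, c, d) (a, b, c, d'))
noncomputable def SAB : ℝ :=
  vNEntropy (Matrix.of fun p q : A × B => ∑ c, ∑ d, ρ (p.1, p.2, c, d) (q.1, q.2, c, d))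
noncomputable def SAC : ℝ :=
  vNEntropy (Matrix.of fun p q : A × C => ∑ b, ∑ d, ρ (p.1, b, p.2, d) (q.1, b, q.2, d))
noncomputable def SAD : ℝ :=
  vNEntropy (Matrix.of fun p q : A × D => ∑ b, ∑ c, ρ (p.1, b, c, p.2) (q.1, b, c, q.2))
noncomputable def SBC : ℝ :=
  vNEntropy (Matrix.of fun p q : B × C => ∑ a, ∑ d, ρ (a, p.1, p.2, d) (a, q.1, q.2, d))
noncomputable def SBD : ℝ :=
  vNEntropy (Matrix.of fun p q : B × D => ∑ a, ∑ c, ρ (a, p.1, c, p.2) (a, q.1, c, q.2))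
noncomputable def SCD : ℝ :=
  vNEntropy (Matrix.of fun p q : C × D => ∑ a, ∑ b, ρ (a, b, p.1, p.2) (a, b, q.1, q.2))
noncomputable def SABC : ℝ :=
  vNEntropy (Matrix.of fun p q : A × B × C =>
    ∑ d, ρ (p.1, p.2.1, p.2.2, d) (q.1, q.2.1, q.2.2, d))
noncomputable def SABD : ℝ :=
  vNEntropy (Matrix.of fun p q : A × B × D =>
    ∑ c, ρ (p.1, p.2.1, c, p.2.2) (q.1, q.2.1, c, q.2.2))
noncomputable def SACD : ℝ :=
  vNEntropy (Matrix.of fun p q : A × C × D =>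
    ∑ b, ρ (p.1, b, p.2.1, p.2.2) (q.1, b, q.2.1, q.2.2))
noncomputable def SBCD : ℝ :=
  vNEntropy (Matrix.of fun p q : B × C × D =>
    ∑ a, ρ (a, p.1, p.2.1, p.2.2) (a, q.1, q.2.1, q.2.2))
noncomputable def SABCD : ℝ := vNEntropy ρ

end Quad

open Matrix Kronecker

set_option linter.unusedSectionVars false

/-! ### Entropy through the characteristic polynomial -/

/-- Von Neumann entropy in natural units, read off from the roots of the characteristic
polynomial, so that it makes sense for every square matrix. -/
noncomputable def ent {n : Type*} [Fintype n] [DecidableEq n] (M : Matrix n n ℂ) : ℝ :=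
  (M.charpoly.roots.map (fun z : ℂ => Real.negMulLog z.re)).sum

section Entropy
variable {m n : Type*} [Fintype m] [DecidableEq m] [Fintype n] [DecidableEq n]

lemma ent_mul_comm (X : Matrix m n ℂ) (Y : Matrix n m ℂ) : ent (X * Y) = ent (Y * X) := by
  have h := congrArg (fun p : Polynomial ℂ =>
    (p.roots.map (fun z : ℂ => Real.negMulLog z.re)).sum) (Matrix.charpoly_mul_comm' X Y)
  have e (k : ℕ) (p : Polynomial ℂ) (hp : p.Monic) :
      ((Polynomial.X ^ k * p).roots.map (fun z : ℂ => Real.negMulLog z.re)).sum =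
        (p.roots.map (fun z : ℂ => Real.negMulLog z.re)).sum := by
    rw [Polynomial.roots_mul (mul_ne_zero (pow_ne_zero _ Polynomial.X_ne_zero) hp.ne_zero)]
    simp [Multiset.map_nsmul, Multiset.sum_nsmul]
  simp only [e _ _ (Matrix.charpoly_monic _)] at h
  exact h

lemma ent_diagonal (d : n → ℝ) :
    ent (diagonal (fun i => (d i : ℂ))) = ∑ i, Real.negMulLog (d i) := by
  unfold ent
  rw [Matrix.charpoly_diagonal, Polynomial.roots_prod]
  · simp only [Polynomial.roots_X_sub_C, Multiset.bind_singleton, Multiset.map_map]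
    rfl
  · exact Finset.prod_ne_zero_iff.2 fun i _ => Polynomial.X_sub_C_ne_zero _

lemma ent_transpose (M : Matrix n n ℂ) : ent Mᵀ = ent M := by
  unfold ent; rw [Matrix.charpoly_transpose]

/-- Conjugation by an isometry preserves the entropy. -/
lemma ent_isometry (V : Matrix m n ℂ) (hV : Vᴴ * V = 1) (M : Matrix n n ℂ) :
    ent (V * M * Vᴴ) = ent M := by
  rw [ent_mul_comm, ← Matrix.mul_assoc, hV, Matrix.one_mul]

lemma ent_submatrix (e : m ≃ n) (M : Matrix n n ℂ) : ent (M.submatrix e e) = ent M := by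
  unfold ent
  have := Matrix.charpoly_reindex e.symm M
  simp only [Matrix.reindex_apply, Equiv.symm_symm] at this
  rw [this]

lemma vNEntropy_eq {M : Matrix n n ℂ} (h : M.IsHermitian) :
    vNEntropy M = ent M / Real.log 2 := by
  unfold vNEntropy ent
  rw [dif_pos h, h.roots_charpoly_eq_eigenvalues]
  simp only [Multiset.map_map]
  change _ = (∑ i, Real.negMulLog ((h.eigenvalues i : ℂ).re)) / Real.log 2
  rw [← Finset.sum_neg_distrib, Finset.sum_div]
  refine Finset.sum_congr rfl fun i _ => ?_
  rw [Complex.ofReal_re, Real.negMulLog, Real.logb]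
  ring

/-- Spectral decomposition of a positive semidefinite matrix. -/
lemma exists_diag {M : Matrix n n ℂ} (h : M.PosSemidef) :
    ∃ (U : Matrix n n ℂ) (d : n → ℝ), Uᴴ * U = 1 ∧ U * Uᴴ = 1 ∧ (∀ i, 0 ≤ d i) ∧
      M = U * diagonal (fun i => (d i : ℂ)) * Uᴴ := by
  refine ⟨h.1.eigenvectorUnitary, h.1.eigenvalues, ?_, ?_, h.eigenvalues_nonneg, ?_⟩
  · exact Unitary.coe_star_mul_self _
  · exact Unitary.coe_mul_star_self _
  · conv_lhs => rw [h.1.spectral_theorem, Unitary.conjStarAlgAut_apply]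
    rfl

lemma ent_diag {M U : Matrix n n ℂ} {d : n → ℝ} (hU : Uᴴ * U = 1)
    (hM : M = U * diagonal (fun i => (d i : ℂ)) * Uᴴ) : ent M = ∑ i, Real.negMulLog (d i) := by
  rw [hM, ent_isometry U hU, ent_diagonal]

/-- Positive semidefinite square root. -/
lemma exists_sqrt {M : Matrix n n ℂ} (h : M.PosSemidef) :
    ∃ q : Matrix n n ℂ, q.PosSemidef ∧ q * q = M := by
  obtain ⟨U, d, hU, hU', hd, hM⟩ := exists_diag h
  refine ⟨U * diagonal (fun i => (Real.sqrt (d i) : ℂ)) * Uᴴ, ?_, ?_⟩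
  · apply PosSemidef.mul_mul_conjTranspose_same
    apply PosSemidef.diagonal
    intro i
    simp
  · have : U * diagonal (fun i => (Real.sqrt (d i) : ℂ)) * Uᴴ *
        (U * diagonal (fun i => (Real.sqrt (d i) : ℂ)) * Uᴴ) =
        U * (diagonal (fun i => (Real.sqrt (d i) : ℂ)) * (Uᴴ * U) *
          diagonal (fun i => (Real.sqrt (d i) : ℂ))) * Uᴴ := by
      simp only [Matrix.mul_assoc]
    rw [this, hU, Matrix.mul_one, diagonal_mul_diagonal, hM]
    congr 3
    ext i
    rw [← Complex.ofReal_mul, Real.mul_self_sqrt (hd i)]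

/-- A positive semidefinite form that vanishes on a matrix kills it. -/
lemma posSemidef_mul_eq_zero {k : Type*} [Fintype k] {M : Matrix n n ℂ}
    (h : M.PosSemidef) {N : Matrix n k ℂ} (h0 : (Nᴴ * M * N).trace = 0) : M * N = 0 := by
  obtain ⟨R, hR, rfl⟩ := exists_sqrt h
  have : ((R * N)ᴴ * (R * N)).trace = 0 := by
    rw [← h0, Matrix.conjTranspose_mul, hR.1.eq]; simp only [Matrix.mul_assoc]
  rw [Matrix.trace_conjTranspose_mul_self_eq_zero_iff] at this
  rw [Matrix.mul_assoc, this, Matrix.mul_zero]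

end Entropy

/-! ### A variational formula for relative entropy -/

/-- Spectral decompositions `τ = W diag(s) Wᴴ` and `θ = U diag(r) Uᴴ` of a pair of positive
semidefinite matrices such that the support of `τ` is contained in that of `θ`. -/
structure SpecPair {n : Type*} [Fintype n] [DecidableEq n] (τ θ : Matrix n n ℂ) where
  U : Matrix n n ℂ
  W : Matrix n n ℂ
  s : n → ℝ
  r : n → ℝ
  hU : Uᴴ * U = 1
  hU' : U * Uᴴ = 1
  hW : Wᴴ * W = 1
  hW' : W * Wᴴ = 1
  s0 : ∀ i, 0 ≤ s i
  r0 : ∀ i, 0 ≤ r i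
  hτ : τ = W * diagonal (fun i => (s i : ℂ)) * Wᴴ
  hθ : θ = U * diagonal (fun i => (r i : ℂ)) * Uᴴ
  supp : ∀ i j, r i = 0 → (Uᴴ * W) i j = 0 ∨ s j = 0

/-- The concave quadratic functional of `Y` whose supremum is
`⟨τ, (L_θ + t R_τ)⁻¹ τ⟩`. It is linear in the pair `(τ, θ)`. -/
noncomputable def quadF {n : Type*} [Fintype n] (τ θ : Matrix n n ℂ) (t : ℝ)
    (Y : Matrix n n ℂ) : ℝ :=
  2 * (Yᴴ * τ).trace.re - t * (Y * τ * Yᴴ).trace.re - (Yᴴ * θ * Y).trace.re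

namespace SpecPair
variable {n : Type*} [Fintype n] [DecidableEq n] {τ θ : Matrix n n ℂ} (P : SpecPair τ θ)

/-- Overlap matrix of the two eigenbases. -/
def g : Matrix n n ℂ := P.Uᴴ * P.W

/-- Transition probabilities between the two eigenbases. -/
def G (i j : n) : ℝ := Complex.normSq (P.g i j)

/-- The supremum of `quadF`. -/
noncomputable def Q (t : ℝ) : ℝ := ∑ i, ∑ j, P.G i j * P.s j ^ 2 / (t * P.s j + P.r i)

/-- A primitive of `Q`. Its value at `0` is `Tr τ log θ`, and its asymptotics at infinity
contain `Tr τ log τ`. -/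
noncomputable def Phi (t : ℝ) : ℝ := ∑ i, ∑ j, P.G i j * P.s j * Real.log (t * P.s j + P.r i)

lemma sum_G (j : n) : ∑ i, P.G i j = 1 := by
  have h : P.gᴴ * P.g = 1 := by
    have : P.gᴴ * P.g = P.Wᴴ * (P.U * P.Uᴴ) * P.W := by
      simp [g, Matrix.conjTranspose_mul, Matrix.mul_assoc]
    rw [this, P.hU', Matrix.mul_one, P.hW]
  have h2 := congrFun (congrFun h j) j
  rw [Matrix.mul_apply, Matrix.one_apply_eq] at h2
  have h3 := congrArg Complex.re h2
  simp only [Complex.re_sum, Matrix.conjTranspose_apply, Complex.one_re] at h3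
  rw [← h3]
  refine Finset.sum_congr rfl fun i _ => ?_
  simp [G, Complex.normSq_apply]

lemma G_nonneg (i j : n) : 0 ≤ P.G i j := Complex.normSq_nonneg _

lemma Gs_cases (i j : n) : P.G i j * P.s j = 0 ∨ (0 < P.s j ∧ 0 < P.r i) := by
  by_cases hs : P.s j = 0
  · left; simp [hs]
  by_cases hr : P.r i = 0
  · left
    rcases P.supp i j hr with h | h
    · simp [G, g, h]
    · exact absurd h hs
  · exact Or.inr ⟨lt_of_le_of_ne (P.s0 j) (Ne.symm hs), lt_of_le_of_ne (P.r0 i) (Ne.symm hr)⟩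

lemma Phi_hasDerivAt {t : ℝ} (ht : 0 < t) : HasDerivAt P.Phi (P.Q t) t := by
  unfold Phi Q
  refine HasDerivAt.fun_sum fun i _ => HasDerivAt.fun_sum fun j _ => ?_
  rcases P.Gs_cases i j with h | ⟨hs, hr⟩
  · have : P.G i j * P.s j ^ 2 / (t * P.s j + P.r i) = 0 := by
      rw [sq, ← mul_assoc, h]; simp
    rw [this, h]
    simpa using hasDerivAt_const t (0 : ℝ)
  · have hpos : t * P.s j + P.r i ≠ 0 := by positivity
    have h1 : HasDerivAt (fun t : ℝ => t * P.s j + P.r i) (P.s j) t := by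
      simpa using ((hasDerivAt_id t).mul_const (P.s j)).add_const (P.r i)
    have h2 := (h1.log hpos).const_mul (P.G i j * P.s j)
    refine HasDerivAt.congr_deriv h2 ?_
    ring

lemma Phi_continuousOn : ContinuousOn P.Phi (Set.Ici 0) := by
  unfold Phi
  refine continuousOn_finsetSum _ fun i _ => continuousOn_finsetSum _ fun j _ => ?_
  rcases P.Gs_cases i j with h | ⟨hs, hr⟩
  · simp only [h, zero_mul]; exact continuousOn_const
  · refine continuousOn_const.mul (ContinuousOn.log (by fun_prop) ?_)
    intro t ht
    have : (0 : ℝ) ≤ t := ht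
    positivity

lemma Phi_tendsto : Filter.Tendsto (fun t => P.Phi t - (∑ j, P.s j) * Real.log t) Filter.atTop
    (nhds (∑ j, P.s j * Real.log (P.s j))) := by
  have e1 : ∀ f : n → ℝ, ∑ j, P.s j * f j = ∑ i, ∑ j, P.G i j * P.s j * f j := by
    intro f
    rw [Finset.sum_comm]
    refine Finset.sum_congr rfl fun j _ => ?_
    simp_rw [mul_assoc]
    rw [← Finset.sum_mul, P.sum_G, one_mul]
  rw [e1]
  have e2 : (fun t => P.Phi t - (∑ j, P.s j) * Real.log t) = fun t =>
      ∑ i, ∑ j, P.G i j * P.s j * (Real.log (t * P.s j + P.r i) - Real.log t) := by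
    ext t
    rw [Finset.sum_mul, e1 (fun _ => Real.log t), Phi]
    simp only [mul_sub, Finset.sum_sub_distrib]
  rw [e2]
  refine tendsto_finsetSum _ fun i _ => tendsto_finsetSum _ fun j _ => ?_
  rcases P.Gs_cases i j with h | ⟨hs, hr⟩
  · simp [h]
  · refine Filter.Tendsto.const_mul _ ?_
    have h1 : Filter.Tendsto (fun t : ℝ => P.s j + P.r i * t⁻¹) Filter.atTop
        (nhds (P.s j)) := by
      simpa using tendsto_const_nhds.add (tendsto_inv_atTop_zero.const_mul (P.r i))
    have h2 := h1.log hs.ne'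
    refine h2.congr' ?_
    filter_upwards [Filter.eventually_gt_atTop 0] with t ht
    rw [← Real.log_div (by positivity) ht.ne']
    congr 1
    field_simp

lemma Phi_zero : P.Phi 0 = ∑ i, ((P.Uᴴ * τ * P.U) i i).re * Real.log (P.r i) := by
  unfold Phi
  refine Finset.sum_congr rfl fun i _ => ?_
  have h : P.Uᴴ * τ * P.U = P.g * diagonal (fun i => (P.s i : ℂ)) * P.gᴴ := by
    have := congrArg (fun M => P.Uᴴ * M * P.U) P.hτ
    simpa only [g, Matrix.conjTranspose_mul, Matrix.conjTranspose_conjTranspose,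
      Matrix.mul_assoc] using this
  rw [h, Matrix.mul_apply, Complex.re_sum, Finset.sum_mul]
  refine Finset.sum_congr rfl fun j _ => ?_
  rw [Matrix.mul_diagonal, Matrix.conjTranspose_apply]
  simp only [G, Complex.normSq_apply, zero_mul, zero_add, Complex.mul_re, Complex.mul_im,
    Complex.ofReal_re, Complex.ofReal_im, RCLike.star_def, Complex.conj_re, Complex.conj_im]
  ring

/-- A matrix in the mixed coordinates (eigenbasis of `θ` on the left, of `τ` on the right). -/
def crd (Y : Matrix n n ℂ) : Matrix n n ℂ := P.Uᴴ * Y * P.W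

lemma crd_inv (Y : Matrix n n ℂ) : Y = P.U * P.crd Y * P.Wᴴ := by
  have : P.U * P.crd Y * P.Wᴴ = (P.U * P.Uᴴ) * Y * (P.W * P.Wᴴ) := by
    simp only [crd, Matrix.mul_assoc]
  rw [this, P.hU', P.hW', Matrix.one_mul, Matrix.mul_one]

lemma crd_tau_apply (i j : n) : P.crd τ i j = P.g i j * P.s j := by
  have : P.crd τ = P.g * diagonal (fun i => (P.s i : ℂ)) * (P.Wᴴ * P.W) := by
    have := congrArg (fun M => P.Uᴴ * M * P.W) P.hτ
    simpa only [crd, g, Matrix.mul_assoc] using this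
  rw [this, P.hW, Matrix.mul_one, Matrix.mul_diagonal]

lemma crd_theta_mul (Y : Matrix n n ℂ) (i j : n) : P.crd (θ * Y) i j = P.r i * P.crd Y i j := by
  have : P.crd (θ * Y) = (P.Uᴴ * P.U) * diagonal (fun i => (P.r i : ℂ)) * P.crd Y := by
    have := congrArg (fun M => P.Uᴴ * (M * Y) * P.W) P.hθ
    simpa only [crd, Matrix.mul_assoc] using this
  rw [this, P.hU, Matrix.one_mul, Matrix.diagonal_mul]

lemma crd_mul_tau (Y : Matrix n n ℂ) (i j : n) : P.crd (Y * τ) i j = P.crd Y i j * P.s j := by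
  have : P.crd (Y * τ) = P.crd Y * diagonal (fun i => (P.s i : ℂ)) * (P.Wᴴ * P.W) := by
    have := congrArg (fun M => P.Uᴴ * (Y * M) * P.W) P.hτ
    simpa only [crd, Matrix.mul_assoc] using this
  rw [this, P.hW, Matrix.mul_one, Matrix.mul_diagonal]

lemma crd_inj {Y Z : Matrix n n ℂ} (h : ∀ i j, P.crd Y i j = P.crd Z i j) : Y = Z := by
  rw [P.crd_inv Y, P.crd_inv Z, Matrix.ext h]

/-- The Hilbert–Schmidt inner product is preserved by `crd`. -/
lemma trace_crd (Y Z : Matrix n n ℂ) :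
    (Yᴴ * Z).trace.re = ∑ i, ∑ j, (star (P.crd Y i j) * P.crd Z i j).re := by
  have h1 : (Yᴴ * Z).trace = ((P.crd Y)ᴴ * P.crd Z).trace := by
    have : (P.crd Y)ᴴ * P.crd Z = P.Wᴴ * (Yᴴ * (P.U * P.Uᴴ) * Z * P.W) := by
      simp [crd, Matrix.conjTranspose_mul, Matrix.mul_assoc]
    rw [this, Matrix.trace_mul_comm P.Wᴴ _, P.hU', Matrix.mul_one, Matrix.mul_assoc, P.hW',
      Matrix.mul_one]
  rw [h1, Matrix.trace]
  simp only [Matrix.diag_apply, Matrix.mul_apply, Complex.re_sum, Matrix.conjTranspose_apply]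
  rw [Finset.sum_comm]

lemma quadF_crd (t : ℝ) (Y : Matrix n n ℂ) : quadF τ θ t Y =
    ∑ i, ∑ j, (2 * (star (P.crd Y i j) * P.g i j).re * P.s j
      - (t * P.s j + P.r i) * Complex.normSq (P.crd Y i j)) := by
  have h1 : (Y * τ * Yᴴ).trace = (Yᴴ * (Y * τ)).trace := Matrix.trace_mul_comm _ _
  have h2 : (Yᴴ * θ * Y) = Yᴴ * (θ * Y) := Matrix.mul_assoc _ _ _
  unfold quadF
  rw [h1, h2, P.trace_crd, P.trace_crd, P.trace_crd, Finset.mul_sum, Finset.mul_sum,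
    ← Finset.sum_sub_distrib, ← Finset.sum_sub_distrib]
  refine Finset.sum_congr rfl fun i _ => ?_
  rw [Finset.mul_sum, Finset.mul_sum, ← Finset.sum_sub_distrib, ← Finset.sum_sub_distrib]
  refine Finset.sum_congr rfl fun j _ => ?_
  rw [P.crd_tau_apply, P.crd_mul_tau, P.crd_theta_mul]
  simp [Complex.normSq_apply]
  ring

/-- Completing the square in each coordinate of `quadF`. -/
lemma term_ident {t : ℝ} (ht : 0 < t) (i j : n) (y : ℂ) :
    (0 < t * P.s j + P.r i ∧ (t * P.s j + P.r i) * (P.G i j * P.s j ^ 2 / (t * P.s j + P.r i) -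
      (2 * (star y * P.g i j).re * P.s j - (t * P.s j + P.r i) * Complex.normSq y)) =
      Complex.normSq (P.g i j * P.s j - (t * P.s j + P.r i : ℝ) * y)) ∨
    (P.s j = 0 ∧ P.r i = 0) := by
  have hs := P.s0 j
  have hr := P.r0 i
  by_cases h : 0 < t * P.s j + P.r i
  · left
    refine ⟨h, ?_⟩
    have : (t * P.s j + P.r i) * (P.G i j * P.s j ^ 2 / (t * P.s j + P.r i)) =
      P.G i j * P.s j ^ 2 := by field_simp
    rw [mul_sub, this]
    simp [Complex.normSq_apply, G]
    ring
  · right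
    have h1 : 0 ≤ t * P.s j := by positivity
    have h2 : t * P.s j = 0 := by linarith
    constructor
    · rcases mul_eq_zero.1 h2 with h3 | h3
      · exact absurd h3 ht.ne'
      · exact h3
    · linarith

lemma term_nonneg {t : ℝ} (ht : 0 < t) (i j : n) (y : ℂ) :
    2 * (star y * P.g i j).re * P.s j - (t * P.s j + P.r i) * Complex.normSq y ≤
    P.G i j * P.s j ^ 2 / (t * P.s j + P.r i) := by
  rcases P.term_ident ht i j y with ⟨h1, h2⟩ | ⟨h1, h2⟩
  · have h3 := Complex.normSq_nonneg (P.g i j * P.s j - (t * P.s j + P.r i : ℝ) * y)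
    rw [← h2] at h3
    have := nonneg_of_mul_nonneg_right h3 h1
    linarith
  · simp [h1, h2]

lemma quadF_le {t : ℝ} (ht : 0 < t) (Y : Matrix n n ℂ) : quadF τ θ t Y ≤ P.Q t := by
  rw [P.quadF_crd]
  exact Finset.sum_le_sum fun i _ => Finset.sum_le_sum fun j _ => P.term_nonneg ht i j _

lemma exists_quadF_eq {t : ℝ} (ht : 0 < t) : ∃ Y, quadF τ θ t Y = P.Q t := by
  refine ⟨P.U * (Matrix.of fun i j => P.g i j * P.s j / (t * P.s j + P.r i : ℝ)) * P.Wᴴ, ?_⟩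
  rw [P.quadF_crd]
  refine Finset.sum_congr rfl fun i _ => Finset.sum_congr rfl fun j _ => ?_
  have hc : P.crd (P.U * (Matrix.of fun i j => P.g i j * P.s j / (t * P.s j + P.r i : ℝ)) * P.Wᴴ)
      = Matrix.of fun i j => P.g i j * P.s j / (t * P.s j + P.r i : ℝ) := by
    set M := (Matrix.of fun i j => P.g i j * P.s j / (t * P.s j + P.r i : ℝ) : Matrix n n ℂ)
    have : P.crd (P.U * M * P.Wᴴ) = (P.Uᴴ * P.U) * M * (P.Wᴴ * P.W) := by
      simp only [crd, Matrix.mul_assoc]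
    rw [this, P.hU, P.hW, Matrix.one_mul, Matrix.mul_one]
  rw [hc]
  set y := (Matrix.of fun i j => P.g i j * P.s j / (t * P.s j + P.r i : ℝ) : Matrix n n ℂ) i j
    with hy
  rcases P.term_ident ht i j y with ⟨h1, h2⟩ | ⟨h1, h2⟩
  · have h3 : P.g i j * P.s j - (t * P.s j + P.r i : ℝ) * y = 0 := by
      have : ((t * P.s j + P.r i : ℝ) : ℂ) ≠ 0 := by exact_mod_cast h1.ne'
      rw [hy, Matrix.of_apply]
      field_simp
      ring
    rw [h3, map_zero] at h2
    rcases mul_eq_zero.1 h2 with h4 | h4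
    · exact absurd h4 h1.ne'
    · linarith
  · simp [h1, h2]

/-- The maximizers of `quadF` are the solutions of the stationarity equation. -/
lemma eq_of_quadF_eq {t : ℝ} (ht : 0 < t) {Y : Matrix n n ℂ} (h : quadF τ θ t Y = P.Q t) :
    θ * Y + (t : ℂ) • (Y * τ) = τ := by
  rw [P.quadF_crd, Q] at h
  have h1 := (Finset.sum_eq_sum_iff_of_le (fun i _ => Finset.sum_le_sum fun j _ =>
    P.term_nonneg ht i j (P.crd Y i j))).1 h
  apply P.crd_inj
  intro i j
  have h2 := (Finset.sum_eq_sum_iff_of_le (fun j _ =>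
    P.term_nonneg ht i j (P.crd Y i j))).1 (h1 i (Finset.mem_univ i)) j (Finset.mem_univ j)
  have e : P.crd (θ * Y + (t : ℂ) • (Y * τ)) i j =
      P.r i * P.crd Y i j + t * (P.crd Y i j * P.s j) := by
    rw [← P.crd_theta_mul, ← P.crd_mul_tau]
    simp [crd, Matrix.mul_add, Matrix.add_mul]
  rw [e, P.crd_tau_apply]
  rcases P.term_ident ht i j (P.crd Y i j) with ⟨h3, h4⟩ | ⟨h3, h4⟩
  · rw [h2, sub_self, mul_zero] at h4
    have := Complex.normSq_eq_zero.1 h4.symm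
    push_cast at this
    linear_combination -this
  · simp [h3, h4]

end SpecPair

/-! ### Partial traces -/

section Ptr
variable {X Y A B C : Type*} [Fintype X] [DecidableEq X] [Fintype Y] [DecidableEq Y]
  [Fintype A] [DecidableEq A] [Fintype B] [DecidableEq B] [Fintype C] [DecidableEq C]

/-- Partial trace over the second tensor factor. -/
def ptr {X Y : Type*} [Fintype Y] (M : Matrix (X × Y) (X × Y) ℂ) : Matrix X X ℂ :=
  Matrix.of fun x₁ x₂ => ∑ y, M (x₁, y) (x₂, y)

/-- Partial trace over the middle tensor factor `B`. -/
def ptrB {A B C : Type*} [Fintype B] (M : Matrix ((A × B) × C) ((A × B) × C) ℂ) :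
    Matrix (A × C) (A × C) ℂ :=
  Matrix.of fun p q => ∑ b, M ((p.1, b), p.2) ((q.1, b), q.2)

/-- Exchange of the last two tensor factors. -/
def sw (A B C : Type*) : (A × B) × C ≃ (A × C) × B where
  toFun p := ((p.1.1, p.2), p.1.2)
  invFun p := ((p.1.1, p.2), p.1.2)
  left_inv _ := rfl
  right_inv _ := rfl

/-- The operator `K` on `A ⊗ C`, regarded as an operator on `A ⊗ B ⊗ C`. -/
def emb {A C : Type*} (B : Type*) [DecidableEq B] (K : Matrix (A × C) (A × C) ℂ) :
    Matrix ((A × B) × C) ((A × B) × C) ℂ :=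
  (K ⊗ₖ (1 : Matrix B B ℂ)).submatrix (sw A B C) (sw A B C)

lemma emb_apply (K : Matrix (A × C) (A × C) ℂ) (p q : (A × B) × C) :
    emb B K p q = if p.1.2 = q.1.2 then K (p.1.1, p.2) (q.1.1, q.2) else 0 := by
  simp [emb, sw, Matrix.kroneckerMap_apply, Matrix.one_apply]

lemma emb_mul (K L : Matrix (A × C) (A × C) ℂ) : emb B (K * L) = emb B K * emb B L := by
  rw [emb, emb, emb, Matrix.submatrix_mul_equiv, ← Matrix.mul_kronecker_mul, Matrix.one_mul]

lemma emb_conjTranspose (K : Matrix (A × C) (A × C) ℂ) : (emb B K)ᴴ = emb B Kᴴ := by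
  rw [emb, emb, Matrix.conjTranspose_submatrix, Matrix.conjTranspose_kronecker,
    Matrix.conjTranspose_one]

lemma emb_kron (K : Matrix A A ℂ) (L : Matrix C C ℂ) :
    emb B (K ⊗ₖ L) = (K ⊗ₖ (1 : Matrix B B ℂ)) ⊗ₖ L := by
  ext p q
  simp [emb_apply, Matrix.kroneckerMap_apply, Matrix.one_apply]

lemma emb_add (K L : Matrix (A × C) (A × C) ℂ) : emb B (K + L) = emb B K + emb B L := by
  ext p q
  simp only [emb_apply, Matrix.add_apply]
  split_ifs <;> simp

lemma emb_smul (c : ℂ) (K : Matrix (A × C) (A × C) ℂ) : emb B (c • K) = c • emb B K := by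
  ext p q
  simp only [emb_apply, Matrix.smul_apply]
  split_ifs <;> simp

lemma trace_kron_mul (K : Matrix X X ℂ) (M : Matrix (X × Y) (X × Y) ℂ) :
    ((K ⊗ₖ (1 : Matrix Y Y ℂ)) * M).trace = (K * ptr M).trace := by
  simp only [Matrix.trace, Matrix.diag_apply, Matrix.mul_apply, Fintype.sum_prod_type, ptr,
    Matrix.of_apply, Matrix.kroneckerMap_apply, Matrix.one_apply, mul_ite, mul_one, mul_zero,
    ite_mul, zero_mul, Finset.sum_ite_eq, Finset.mem_univ, if_true, Finset.mul_sum]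
  refine Finset.sum_congr rfl fun x _ => ?_
  rw [Finset.sum_comm]

lemma trace_emb_mul (K : Matrix (A × C) (A × C) ℂ) (M : Matrix ((A × B) × C) ((A × B) × C) ℂ) :
    (emb B K * M).trace = (K * ptrB M).trace := by
  have h := trace_kron_mul K (M.submatrix (sw A B C).symm (sw A B C).symm)
  have h2 : ptr (M.submatrix (sw A B C).symm (sw A B C).symm) = ptrB M := rfl
  have h3 : (emb B K * M) = ((K ⊗ₖ (1 : Matrix B B ℂ)) *
      M.submatrix (sw A B C).symm (sw A B C).symm).submatrix (sw A B C) (sw A B C) := by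
    rw [← Matrix.submatrix_mul_equiv _ _ _ (sw A B C)]
    simp [emb]
  rw [← h2, ← h, h3]
  exact Equiv.sum_comp (sw A B C) (fun i => ((K ⊗ₖ (1 : Matrix B B ℂ)) *
      M.submatrix (sw A B C).symm (sw A B C).symm) i i)

lemma ptrB_kron (ω : Matrix (A × B) (A × B) ℂ) :
    ptrB (ω ⊗ₖ (1 : Matrix C C ℂ)) = ptr ω ⊗ₖ (1 : Matrix C C ℂ) := by
  ext p q
  simp [ptrB, ptr, Matrix.kroneckerMap_apply, Finset.sum_mul]

lemma ptr_ptrB (M : Matrix ((A × B) × C) ((A × B) × C) ℂ) : ptr (ptrB M) = ptr (ptr M) := by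
  ext p q
  simp only [ptrB, ptr, Matrix.of_apply]
  rw [Finset.sum_comm]

lemma ptr_posSemidef {M : Matrix (X × Y) (X × Y) ℂ} (h : M.PosSemidef) : (ptr M).PosSemidef := by
  have : ptr M = ∑ y, M.submatrix (fun x => (x, y)) (fun x => (x, y)) := by
    ext x x'
    simp [ptr, Matrix.sum_apply]
  rw [this]
  exact Matrix.posSemidef_sum _ fun y _ => h.submatrix _

lemma ptrB_posSemidef {M : Matrix ((A × B) × C) ((A × B) × C) ℂ} (h : M.PosSemidef) :
    (ptrB M).PosSemidef :=
  ptr_posSemidef (h.submatrix (sw A B C).symm)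

lemma trace_ptr (M : Matrix (X × Y) (X × Y) ℂ) : (ptr M).trace = M.trace := by
  simp [ptr, Matrix.trace, Fintype.sum_prod_type]

lemma ptr_conj (K L : Matrix X X ℂ) (M : Matrix (X × Y) (X × Y) ℂ) :
    ptr ((K ⊗ₖ (1 : Matrix Y Y ℂ)) * M * (L ⊗ₖ (1 : Matrix Y Y ℂ))) = K * ptr M * L := by
  ext x x'
  simp only [Matrix.mul_apply, Fintype.sum_prod_type, ptr,
    Matrix.of_apply, Matrix.kroneckerMap_apply, Matrix.one_apply, mul_ite, mul_one, mul_zero,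
    ite_mul, zero_mul, Finset.sum_ite_eq, Finset.sum_ite_eq', Finset.mem_univ, if_true,
    Finset.mul_sum, Finset.sum_mul]
  rw [Finset.sum_comm]
  refine Finset.sum_congr rfl fun x _ => ?_
  rw [Finset.sum_comm]

/-- Restricting the variational functional to operators on `A ⊗ C` amounts to tracing out `B`. -/
lemma quadF_emb (τ θ : Matrix ((A × B) × C) ((A × B) × C) ℂ) (t : ℝ)
    (K : Matrix (A × C) (A × C) ℂ) :
    quadF τ θ t (emb B K) = quadF (ptrB τ) (ptrB θ) t K := by
  unfold quadF
  rw [emb_conjTranspose, trace_emb_mul, Matrix.trace_mul_comm _ (emb B Kᴴ),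
    Matrix.trace_mul_comm _ (emb B K), ← Matrix.mul_assoc, ← Matrix.mul_assoc, ← emb_mul,
    ← emb_mul, trace_emb_mul, trace_emb_mul, Matrix.trace_mul_comm _ Kᴴ, ← Matrix.mul_assoc,
    Matrix.trace_mul_comm _ K, ← Matrix.mul_assoc]

end Ptr

/-! ### Strong subadditivity -/

section SSA
variable {X Y A B C : Type*} [Fintype X] [DecidableEq X] [Fintype Y] [DecidableEq Y]
  [Fintype A] [DecidableEq A] [Fintype B] [DecidableEq B] [Fintype C] [DecidableEq C]

lemma SpecPair.trace_eq {n : Type*} [Fintype n] [DecidableEq n] {τ θ : Matrix n n ℂ}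
    (P : SpecPair τ θ) : ((∑ j, P.s j : ℝ) : ℂ) = τ.trace := by
  have h := congrArg Matrix.trace P.hτ
  rw [Matrix.trace_mul_comm, ← Matrix.mul_assoc, P.hW, Matrix.one_mul, Matrix.trace_diagonal] at h
  rw [h]
  push_cast
  rfl

/-- The pair `(τ, Tr_Y τ ⊗ 1)`, with any given eigenbasis of `Tr_Y τ`. -/
lemma exists_specPair {τ : Matrix (X × Y) (X × Y) ℂ} (hτ : τ.PosSemidef) {U : Matrix X X ℂ}
    {d : X → ℝ} (hU : Uᴴ * U = 1) (hU' : U * Uᴴ = 1) (hd : ∀ i, 0 ≤ d i)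
    (h : ptr τ = U * diagonal (fun i => (d i : ℂ)) * Uᴴ) :
    ∃ P : SpecPair τ (ptr τ ⊗ₖ (1 : Matrix Y Y ℂ)), P.U = U ⊗ₖ (1 : Matrix Y Y ℂ) ∧
      (P.r = fun i => d i.1) ∧ P.Phi 0 = - ent (ptr τ) := by
  obtain ⟨W, s, hW, hW', hs, hτ'⟩ := exists_diag hτ
  have hUc : (U ⊗ₖ (1 : Matrix Y Y ℂ))ᴴ = Uᴴ ⊗ₖ (1 : Matrix Y Y ℂ) := by
    rw [Matrix.conjTranspose_kronecker, Matrix.conjTranspose_one]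
  -- the diagonal of `τ` in the product basis has marginal `d`
  have key : ∀ k, ∑ l, (((U ⊗ₖ (1 : Matrix Y Y ℂ))ᴴ * τ * (U ⊗ₖ (1 : Matrix Y Y ℂ)))
      (k, l) (k, l)).re = d k := by
    intro k
    have h1 : Uᴴ * ptr τ * U = diagonal (fun i => (d i : ℂ)) := by
      rw [h]
      calc _ = (Uᴴ * U) * diagonal (fun i => (d i : ℂ)) * (Uᴴ * U) := by
            simp only [Matrix.mul_assoc]
        _ = _ := by rw [hU, Matrix.one_mul, Matrix.mul_one]
    rw [← ptr_conj, ← hUc] at h1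
    have h2 := congrArg Complex.re (congrFun (congrFun h1 k) k)
    rw [Matrix.diagonal_apply_eq, Complex.ofReal_re] at h2
    rw [← h2]
    simp [ptr]
  have hpos : ∀ i, 0 ≤ (((U ⊗ₖ (1 : Matrix Y Y ℂ))ᴴ * τ * (U ⊗ₖ (1 : Matrix Y Y ℂ))) i i).re := by
    intro i
    have := (hτ.conjTranspose_mul_mul_same (U ⊗ₖ (1 : Matrix Y Y ℂ))).diag_nonneg (i := i)
    exact (Complex.le_def.1 this).1
  have hdiag : ∀ i, (((U ⊗ₖ (1 : Matrix Y Y ℂ))ᴴ * τ * (U ⊗ₖ (1 : Matrix Y Y ℂ))) i i).re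
      = ∑ j, Complex.normSq (((U ⊗ₖ (1 : Matrix Y Y ℂ))ᴴ * W) i j) * s j := by
    intro i
    have : (U ⊗ₖ (1 : Matrix Y Y ℂ))ᴴ * τ * (U ⊗ₖ (1 : Matrix Y Y ℂ)) =
        ((U ⊗ₖ (1 : Matrix Y Y ℂ))ᴴ * W) * diagonal (fun i => (s i : ℂ)) *
        ((U ⊗ₖ (1 : Matrix Y Y ℂ))ᴴ * W)ᴴ := by
      rw [hτ']
      simp only [Matrix.conjTranspose_mul, Matrix.conjTranspose_conjTranspose, Matrix.mul_assoc]
    rw [this, Matrix.mul_apply, Complex.re_sum]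
    refine Finset.sum_congr rfl fun j _ => ?_
    rw [Matrix.mul_diagonal, Matrix.conjTranspose_apply]
    simp only [Complex.normSq_apply, Complex.mul_re, Complex.mul_im,
      Complex.ofReal_re, Complex.ofReal_im, RCLike.star_def, Complex.conj_re, Complex.conj_im]
    ring
  let P : SpecPair τ (ptr τ ⊗ₖ (1 : Matrix Y Y ℂ)) :=
    { U := U ⊗ₖ (1 : Matrix Y Y ℂ)
      W := W
      s := s
      r := fun i => d i.1
      hU := by rw [hUc, ← Matrix.mul_kronecker_mul, hU, Matrix.one_mul, Matrix.one_kronecker_one]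
      hU' := by rw [hUc, ← Matrix.mul_kronecker_mul, hU', Matrix.one_mul, Matrix.one_kronecker_one]
      hW := hW
      hW' := hW'
      s0 := hs
      r0 := fun i => hd i.1
      hτ := hτ'
      hθ := by
        have : diagonal (fun i : X × Y => (d i.1 : ℂ)) =
            diagonal (fun i => (d i : ℂ)) ⊗ₖ (1 : Matrix Y Y ℂ) := by
          rw [← Matrix.diagonal_one, Matrix.diagonal_kronecker_diagonal]
          simp
        rw [this, hUc, ← Matrix.mul_kronecker_mul, ← Matrix.mul_kronecker_mul, ← h,
          Matrix.one_mul, Matrix.one_mul]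
      supp := by
        intro i j hi
        have h1 := key i.1
        rw [hi] at h1
        have h2 := (Finset.sum_eq_zero_iff_of_nonneg (fun l _ => hpos (i.1, l))).1 h1 i.2
          (Finset.mem_univ _)
        rw [hdiag] at h2
        have h3 := (Finset.sum_eq_zero_iff_of_nonneg (fun j _ =>
          mul_nonneg (Complex.normSq_nonneg _) (hs j))).1 h2 j (Finset.mem_univ _)
        rcases mul_eq_zero.1 h3 with h4 | h4
        · exact Or.inl (Complex.normSq_eq_zero.1 h4)
        · exact Or.inr h4 }
  refine ⟨P, rfl, rfl, ?_⟩
  rw [P.Phi_zero, Fintype.sum_prod_type, ent_diag hU h, ← Finset.sum_neg_distrib]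
  refine Finset.sum_congr rfl fun k _ => ?_
  change ∑ l, (((U ⊗ₖ (1 : Matrix Y Y ℂ))ᴴ * τ * (U ⊗ₖ (1 : Matrix Y Y ℂ)))
      (k, l) (k, l)).re * Real.log (d k) = _
  rw [← Finset.sum_mul, key, Real.negMulLog]
  ring

lemma SpecPair.ent_eq {n : Type*} [Fintype n] [DecidableEq n] {τ θ : Matrix n n ℂ}
    (P : SpecPair τ θ) : ∑ j, P.s j * Real.log (P.s j) = - ent τ := by
  rw [ent_diag P.hW P.hτ, ← Finset.sum_neg_distrib]
  refine Finset.sum_congr rfl fun k _ => ?_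
  rw [Real.negMulLog]
  ring

section Pair
variable {τ θ : Matrix ((A × B) × C) ((A × B) × C) ℂ} (P : SpecPair τ θ)
  {σ φ : Matrix (A × C) (A × C) ℂ} (R : SpecPair σ φ)

/-- The supremum `Q` decreases under partial trace: operators on `A ⊗ C` are among the
competitors on `A ⊗ B ⊗ C`. -/
lemma Q_le (hσ : ptrB τ = σ) (hφ : ptrB θ = φ) {t : ℝ} (ht : 0 < t) : R.Q t ≤ P.Q t := by
  obtain ⟨K, hK⟩ := R.exists_quadF_eq ht
  rw [← hK, ← hσ, ← hφ, ← quadF_emb]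
  exact P.quadF_le ht _

lemma trace_ptrB (M : Matrix ((A × B) × C) ((A × B) × C) ℂ) : (ptrB M).trace = M.trace := by
  rw [← trace_ptr, ptr_ptrB, trace_ptr, trace_ptr]

lemma Phi_mono (hσ : ptrB τ = σ) (hφ : ptrB θ = φ) :
    MonotoneOn (fun t => P.Phi t - R.Phi t) (Set.Ici 0) := by
  have hd : ∀ t : ℝ, 0 < t → HasDerivAt (fun t => P.Phi t - R.Phi t) (P.Q t - R.Q t) t :=
    fun t ht => (P.Phi_hasDerivAt ht).sub (R.Phi_hasDerivAt ht)
  refine monotoneOn_of_deriv_nonneg (convex_Ici 0) (P.Phi_continuousOn.sub R.Phi_continuousOn) ?_ ?_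
  · rw [interior_Ici]
    exact fun t ht => (hd t ht).differentiableAt.differentiableWithinAt
  · rw [interior_Ici]
    intro t ht
    rw [(hd t ht).deriv]
    exact sub_nonneg.2 (Q_le P R hσ hφ ht)

/-- The logarithmic divergences of the two primitives cancel, since the traces agree. -/
lemma Phi_lim (hσ : ptrB τ = σ) : Filter.Tendsto (fun t => P.Phi t - R.Phi t) Filter.atTop
    (nhds (ent σ - ent τ)) := by
  have h := P.Phi_tendsto.sub R.Phi_tendsto
  have hs : ∑ j, P.s j = ∑ j, R.s j := by
    have := P.trace_eq.trans ((trace_ptrB τ).symm.trans ((congrArg Matrix.trace hσ).trans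
      R.trace_eq.symm))
    exact_mod_cast this
  rw [P.ent_eq, R.ent_eq] at h
  refine (h.congr fun t => ?_).trans (le_of_eq ?_)
  · rw [hs]; ring
  · congr 1; ring

lemma Phi_le_lim (hσ : ptrB τ = σ) (hφ : ptrB θ = φ) {t : ℝ} (ht : 0 ≤ t) :
    P.Phi t - R.Phi t ≤ ent σ - ent τ := by
  refine ge_of_tendsto (Phi_lim P R hσ) ?_
  filter_upwards [Filter.eventually_ge_atTop t] with u hu
  exact Phi_mono P R hσ hφ ht (le_trans ht hu) hu

/-- In the equality case the primitive is constant, so the two suprema agree and a maximizer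
on `A ⊗ C` solves both stationarity equations. -/
lemma exists_stationary (hσ : ptrB τ = σ) (hφ : ptrB θ = φ)
    (heq : P.Phi 0 - R.Phi 0 = ent σ - ent τ) {t : ℝ} (ht : 0 < t) :
    ∃ K : Matrix (A × C) (A × C) ℂ, θ * emb B K + (t : ℂ) • (emb B K * τ) = τ ∧
      φ * K + (t : ℂ) • (K * σ) = σ := by
  have hconst : ∀ u : ℝ, 0 ≤ u → P.Phi u - R.Phi u = ent σ - ent τ := by
    intro u hu
    refine le_antisymm (Phi_le_lim P R hσ hφ hu) ?_
    rw [← heq]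
    exact Phi_mono P R hσ hφ (Set.mem_Ici.2 le_rfl) hu hu
  have hd : HasDerivAt (fun t => P.Phi t - R.Phi t) (P.Q t - R.Q t) t :=
    (P.Phi_hasDerivAt ht).sub (R.Phi_hasDerivAt ht)
  have hd0 : HasDerivAt (fun t => P.Phi t - R.Phi t) 0 t := by
    refine (hasDerivAt_const t (ent σ - ent τ)).congr_of_eventuallyEq ?_
    filter_upwards [lt_mem_nhds ht] with u hu
    exact hconst u hu.le
  have hQ : P.Q t = R.Q t := sub_eq_zero.1 (hd.unique hd0)
  obtain ⟨K, hK⟩ := R.exists_quadF_eq ht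
  refine ⟨K, P.eq_of_quadF_eq ht ?_, R.eq_of_quadF_eq ht hK⟩
  rw [quadF_emb, hσ, hφ, hK, hQ]

end Pair

/-- Strong subadditivity of the von Neumann entropy (no normalization needed). -/
theorem ssa {τ : Matrix ((A × B) × C) ((A × B) × C) ℂ} (hτ : τ.PosSemidef) :
    ent τ + ent (ptr (ptr τ)) ≤ ent (ptr τ) + ent (ptrB τ) := by
  obtain ⟨U, d, hU, hU', hd, h⟩ := exists_diag (ptr_posSemidef hτ)
  obtain ⟨P, -, -, hP⟩ := exists_specPair hτ hU hU' hd h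
  obtain ⟨U, d, hU, hU', hd, h⟩ := exists_diag (ptr_posSemidef (ptrB_posSemidef hτ))
  obtain ⟨R, -, -, hR⟩ := exists_specPair (ptrB_posSemidef hτ) hU hU' hd h
  have := Phi_le_lim P R rfl (by rw [ptrB_kron, ptr_ptrB]) le_rfl
  rw [hP, hR, ptr_ptrB] at this
  linarith

end SSA

/-! ### Interpolation by resolvents -/

section Interp

/-- The functions `x ↦ 1 / (t + x)`, `t > 0`. -/
def resolvents : Set (ℝ → ℝ) := {f | ∃ t : ℝ, 0 < t ∧ f = fun x => 1 / (t + x)}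

/-- The functions `1 / (t + x)` interpolate arbitrary values on a finite set of positive
nodes: a functional annihilating all of them gives a rational function of `t` vanishing on
`t > 0`, whose numerator is then the zero polynomial. -/
lemma exists_interp (S : Finset ℝ) (hS : ∀ x ∈ S, 0 < x) (f : ℝ → ℝ) :
    ∃ f' ∈ Submodule.span ℝ resolvents, ∀ x ∈ S, f' x = f x := by
  classical
  let L : (ℝ → ℝ) →ₗ[ℝ] (S → ℝ) := LinearMap.funLeft ℝ ℝ (fun x : S => (x : ℝ))
  suffices h : (Submodule.span ℝ resolvents).map L = ⊤ by
    have hf : L f ∈ (Submodule.span ℝ resolvents).map L := by rw [h]; trivial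
    obtain ⟨f', hf', he⟩ := hf
    exact ⟨f', hf', fun x hx => congrFun he ⟨x, hx⟩⟩
  by_contra hne
  obtain ⟨ℓ, hℓ, hker⟩ := Submodule.exists_le_ker_of_lt_top _ (lt_top_iff_ne_top.2 hne)
  apply hℓ
  let c : S → ℝ := fun x => ℓ (Pi.single x 1)
  have hsum : ∀ v : S → ℝ, ℓ v = ∑ x, v x * c x := by
    intro v
    have : v = ∑ x, v x • (Pi.single x (1 : ℝ) : S → ℝ) := by
      ext y
      simp [Finset.sum_apply, Pi.single_apply]
    conv_lhs => rw [this]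
    simp [c]
  have hz : ∀ t : ℝ, 0 < t → ∑ x : S, 1 / (t + x) * c x = 0 := by
    intro t ht
    have : L (fun x => 1 / (t + x)) ∈ LinearMap.ker ℓ :=
      hker (Submodule.mem_map_of_mem (Submodule.subset_span ⟨t, ht, rfl⟩))
    rw [LinearMap.mem_ker, hsum] at this
    exact this
  let p : Polynomial ℝ := ∑ x : S, Polynomial.C (c x) *
    ∏ y ∈ Finset.univ.erase x, (Polynomial.X + Polynomial.C (y : ℝ))
  have hp : p = 0 := by
    refine Polynomial.eq_zero_of_infinite_isRoot p ((Set.Ioi_infinite (0 : ℝ)).mono ?_)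
    intro t ht
    have ht : 0 < t := ht
    have h1 : p.eval t = (∏ y : S, (t + y)) * ∑ x : S, 1 / (t + x) * c x := by
      simp only [p, Polynomial.eval_finsetSum, Polynomial.eval_mul, Polynomial.eval_C,
        Polynomial.eval_prod, Polynomial.eval_add, Polynomial.eval_X, Finset.mul_sum]
      refine Finset.sum_congr rfl fun x _ => ?_
      rw [← Finset.mul_prod_erase Finset.univ _ (Finset.mem_univ x)]
      have : t + (x : ℝ) ≠ 0 := (add_pos ht (hS x x.2)).ne'
      field_simp
    change p.eval t = 0
    rw [h1, hz t ht, mul_zero]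
  have hc : ∀ x, c x = 0 := by
    intro x
    have h1 : p.eval (-(x : ℝ)) = 0 := by rw [hp]; simp
    simp only [p, Polynomial.eval_finsetSum, Polynomial.eval_mul, Polynomial.eval_C,
        Polynomial.eval_prod, Polynomial.eval_add, Polynomial.eval_X] at h1
    rw [Finset.sum_eq_single x] at h1
    · rcases mul_eq_zero.1 h1 with h2 | h2
      · exact h2
      · exfalso
        obtain ⟨y, hy, h3⟩ := Finset.prod_eq_zero_iff.1 h2
        apply (Finset.mem_erase.1 hy).1
        ext
        linarith
    · intro y _ hy
      rw [Finset.prod_eq_zero (Finset.mem_erase.2 ⟨hy.symm, Finset.mem_univ x⟩), mul_zero]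
      ring
    · simp
  refine LinearMap.ext fun v => ?_
  rw [hsum]
  simp [hc]

/-- Coordinates of `f (L_θ R_τ⁻¹)` applied to the identity, on the support. -/
def SpecPair.Rep {n : Type*} [Fintype n] [DecidableEq n] {τ θ : Matrix n n ℂ}
    (P : SpecPair τ θ) (f : ℝ → ℝ) (Z : Matrix n n ℂ) : Prop :=
  (∀ i j, 0 < P.s j → 0 < P.r i → P.crd Z i j = P.g i j * f (P.r i / P.s j)) ∧
  (∀ i j, 0 < P.r i ∨ 0 < P.s j → P.g i j * P.s j = 0 → P.crd Z i j = 0)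

namespace SpecPair
variable {n : Type*} [Fintype n] [DecidableEq n] {τ θ : Matrix n n ℂ} (P : SpecPair τ θ)

lemma crd_add (Y Z : Matrix n n ℂ) : P.crd (Y + Z) = P.crd Y + P.crd Z := by
  simp [crd, Matrix.mul_add, Matrix.add_mul]

lemma crd_smul (c : ℂ) (Y : Matrix n n ℂ) : P.crd (c • Y) = c • P.crd Y := by
  simp [crd]

lemma Rep.add {f f' : ℝ → ℝ} {Z Z' : Matrix n n ℂ} (h : P.Rep f Z) (h' : P.Rep f' Z') :
    P.Rep (f + f') (Z + Z') := by
  refine ⟨fun i j hs hr => ?_, fun i j hsr hg => ?_⟩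
  · rw [crd_add, Matrix.add_apply, h.1 i j hs hr, h'.1 i j hs hr, Pi.add_apply]
    push_cast
    ring
  · rw [crd_add, Matrix.add_apply, h.2 i j hsr hg, h'.2 i j hsr hg, add_zero]

lemma Rep.smul {f : ℝ → ℝ} {Z : Matrix n n ℂ} (c : ℝ) (h : P.Rep f Z) :
    P.Rep (c • f) ((c : ℂ) • Z) := by
  refine ⟨fun i j hs hr => ?_, fun i j hsr hg => ?_⟩
  · rw [crd_smul, Matrix.smul_apply, h.1 i j hs hr, Pi.smul_apply]
    simp only [smul_eq_mul]
    push_cast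
    ring
  · rw [crd_smul, Matrix.smul_apply, h.2 i j hsr hg, smul_zero]

lemma Rep.zero : P.Rep 0 0 := by
  constructor <;> intros <;> simp [crd]

/-- The solution of the stationarity equation is the resolvent `x ↦ 1 / (t + x)` of `L_θ R_τ⁻¹`,
applied to the identity. -/
lemma rep_of_stationary {t : ℝ} (ht : 0 < t) {Z : Matrix n n ℂ}
    (h : θ * Z + (t : ℂ) • (Z * τ) = τ) : P.Rep (fun x => 1 / (t + x)) Z := by
  have e : ∀ i j, P.r i * P.crd Z i j + t * (P.crd Z i j * P.s j) = P.g i j * P.s j := by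
    intro i j
    have := congrFun (congrFun (congrArg P.crd h) i) j
    rw [crd_add, crd_smul, Matrix.add_apply, Matrix.smul_apply, P.crd_theta_mul, P.crd_mul_tau,
      P.crd_tau_apply] at this
    exact this
  refine ⟨fun i j hs hr => ?_, fun i j hsr hg => ?_⟩
  · have h1 : ((P.s j : ℝ) : ℂ) ≠ 0 := by exact_mod_cast hs.ne'
    have h2 : ((t + P.r i / P.s j : ℝ) : ℂ) ≠ 0 := by
      have : 0 < t + P.r i / P.s j := by positivity
      exact_mod_cast this.ne'
    have h3 := e i j
    rw [Complex.ofReal_div, mul_div_assoc', eq_div_iff h2]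
    push_cast
    field_simp
    linear_combination h3
  · have h3 := e i j
    rw [hg] at h3
    have h4 : ((P.r i + t * P.s j : ℝ) : ℂ) * P.crd Z i j = 0 := by
      push_cast
      linear_combination h3
    have h5 : 0 < P.r i + t * P.s j := by
      have := P.r0 i
      have := P.s0 j
      rcases hsr with h | h <;> positivity
    rcases mul_eq_zero.1 h4 with h6 | h6
    · exact absurd h6 (by exact_mod_cast h5.ne')
    · exact h6

/-- With `f (x) = x ^ (-1/2)` on the relevant quotients, `Rep` gives
`θ ^ (1/2) Z = τ ^ (1/2)`. -/
lemma sqrt_of_rep {f : ℝ → ℝ} (hf : ∀ i j, 0 < P.s j → 0 < P.r i →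
    f (P.r i / P.s j) = (Real.sqrt (P.r i / P.s j))⁻¹) {Z : Matrix n n ℂ} (h : P.Rep f Z) :
    P.U * diagonal (fun i => (Real.sqrt (P.r i) : ℂ)) * P.Uᴴ * Z =
      P.W * diagonal (fun i => (Real.sqrt (P.s i) : ℂ)) * P.Wᴴ := by
  apply P.crd_inj
  intro i j
  have e1 : P.crd (P.U * diagonal (fun i => (Real.sqrt (P.r i) : ℂ)) * P.Uᴴ * Z) =
      (P.Uᴴ * P.U) * diagonal (fun i => (Real.sqrt (P.r i) : ℂ)) * P.crd Z := by
    simp only [crd, Matrix.mul_assoc]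
  have e2 : P.crd (P.W * diagonal (fun i => (Real.sqrt (P.s i) : ℂ)) * P.Wᴴ) =
      P.g * diagonal (fun i => (Real.sqrt (P.s i) : ℂ)) * (P.Wᴴ * P.W) := by
    simp only [crd, g, Matrix.mul_assoc]
  rw [e1, e2, P.hU, P.hW, Matrix.one_mul, Matrix.mul_one, Matrix.mul_diagonal,
    Matrix.diagonal_mul]
  rcases (P.s0 j).eq_or_lt with hs | hs
  · rw [← hs, Real.sqrt_zero]
    rcases (P.r0 i).eq_or_lt with hr | hr
    · rw [← hr, Real.sqrt_zero]; simp
    · rw [h.2 i j (Or.inl hr) (by rw [← hs]; simp)]; simp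
  · by_cases hg : P.g i j = 0
    · rw [h.2 i j (Or.inr hs) (by rw [hg]; simp), hg]; simp
    · have hr : 0 < P.r i := by
        rcases P.Gs_cases i j with h1 | h1
        · exfalso
          rcases mul_eq_zero.1 h1 with h2 | h2
          · exact hg (Complex.normSq_eq_zero.1 h2)
          · exact hs.ne' h2
        · exact h1.2
      rw [h.1 i j hs hr, hf i j hs hr]
      have h1 : Real.sqrt (P.r i) * (Real.sqrt (P.r i / P.s j))⁻¹ = Real.sqrt (P.s j) := by
        rw [Real.sqrt_div hr.le]
        have := (Real.sqrt_pos.2 hr).ne'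
        have := (Real.sqrt_pos.2 hs).ne'
        field_simp
      rw [← h1]
      push_cast
      ring

end SpecPair
end Interp

/-! ### The equality case of strong subadditivity -/

section Eq
variable {X Y A B C : Type*} [Fintype X] [DecidableEq X] [Fintype Y] [DecidableEq Y]
  [Fintype A] [DecidableEq A] [Fintype B] [DecidableEq B] [Fintype C] [DecidableEq C]

lemma kron_one_mul (K L : Matrix X X ℂ) :
    (K * L) ⊗ₖ (1 : Matrix Y Y ℂ) = (K ⊗ₖ (1 : Matrix Y Y ℂ)) * (L ⊗ₖ (1 : Matrix Y Y ℂ)) := by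
  rw [← Matrix.mul_kronecker_mul, Matrix.one_mul]

lemma kron_one_conjTranspose (K : Matrix X X ℂ) :
    (K ⊗ₖ (1 : Matrix Y Y ℂ))ᴴ = Kᴴ ⊗ₖ (1 : Matrix Y Y ℂ) := by
  rw [Matrix.conjTranspose_kronecker, Matrix.conjTranspose_one]

lemma kron_diag (U : Matrix X X ℂ) (f : X → ℂ) :
    (U ⊗ₖ (1 : Matrix Y Y ℂ)) * diagonal (fun i : X × Y => f i.1) * (U ⊗ₖ (1 : Matrix Y Y ℂ))ᴴ =
      (U * diagonal f * Uᴴ) ⊗ₖ (1 : Matrix Y Y ℂ) := by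
  have : diagonal (fun i : X × Y => f i.1) = diagonal f ⊗ₖ (1 : Matrix Y Y ℂ) := by
    rw [← Matrix.diagonal_one, Matrix.diagonal_kronecker_diagonal]
    simp
  rw [this, kron_one_mul, kron_one_mul, kron_one_conjTranspose]

lemma diag_conj_mul {U : Matrix X X ℂ} (hU : Uᴴ * U = 1) (f g : X → ℂ) :
    (U * diagonal f * Uᴴ) * (U * diagonal g * Uᴴ) = U * diagonal (fun i => f i * g i) * Uᴴ := by
  have : (U * diagonal f * Uᴴ) * (U * diagonal g * Uᴴ) =
      U * (diagonal f * (Uᴴ * U) * diagonal g) * Uᴴ := by simp only [Matrix.mul_assoc]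
  rw [this, hU, Matrix.mul_one, diagonal_mul_diagonal]

lemma diag_conj_conjTranspose (U : Matrix X X ℂ) (f : X → ℝ) :
    (U * diagonal (fun i => (f i : ℂ)) * Uᴴ)ᴴ = U * diagonal (fun i => (f i : ℂ)) * Uᴴ := by
  simp only [Matrix.conjTranspose_mul, Matrix.conjTranspose_conjTranspose,
    Matrix.diagonal_conjTranspose, Matrix.mul_assoc]
  congr 3
  ext i
  simp

lemma SpecPair.sqrt_sq {n : Type*} [Fintype n] [DecidableEq n] {τ θ : Matrix n n ℂ}
    (P : SpecPair τ θ) : (P.W * diagonal (fun i => (Real.sqrt (P.s i) : ℂ)) * P.Wᴴ) *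
      (P.W * diagonal (fun i => (Real.sqrt (P.s i) : ℂ)) * P.Wᴴ)ᴴ = τ := by
  rw [diag_conj_conjTranspose, diag_conj_mul P.hW]
  refine Eq.trans ?_ P.hτ.symm
  congr 3
  ext i
  rw [← Complex.ofReal_mul, Real.mul_self_sqrt (P.s0 i)]

/-- In the equality case of strong subadditivity, `τ` and its `AC`-marginal are both obtained
from one operator on `A ⊗ C`, by sandwiching it between the square roots of the `AB`- and
`A`-marginals. -/
lemma exists_sandwich {τ : Matrix ((A × B) × C) ((A × B) × C) ℂ} (hτ : τ.PosSemidef)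
    (heq : ent τ + ent (ptr (ptr τ)) = ent (ptr τ) + ent (ptrB τ))
    {q : Matrix (A × B) (A × B) ℂ} (hq : q.PosSemidef) (hqq : q * q = ptr τ)
    {V : Matrix A A ℂ} {d : A → ℝ} (hV : Vᴴ * V = 1) (hV' : V * Vᴴ = 1) (hd : ∀ i, 0 ≤ d i)
    (h : ptr (ptr τ) = V * diagonal (fun i => (d i : ℂ)) * Vᴴ) :
    ∃ T : Matrix (A × C) (A × C) ℂ, Tᴴ = T ∧
      (q ⊗ₖ (1 : Matrix C C ℂ)) * emb B T * (q ⊗ₖ (1 : Matrix C C ℂ)) = τ ∧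
      ((V * diagonal (fun i => (Real.sqrt (d i) : ℂ)) * Vᴴ) ⊗ₖ (1 : Matrix C C ℂ)) * T *
        ((V * diagonal (fun i => (Real.sqrt (d i) : ℂ)) * Vᴴ) ⊗ₖ (1 : Matrix C C ℂ)) =
          ptrB τ := by
  classical
  obtain ⟨U, e, hU, hU', he, hqe⟩ := exists_diag hq
  have hω : ptr τ = U * diagonal (fun i => ((e i ^ 2 : ℝ) : ℂ)) * Uᴴ := by
    rw [← hqq, hqe, diag_conj_mul hU]
    congr 3
    ext i
    push_cast
    ring
  obtain ⟨P, hPU, hPr, hP⟩ := exists_specPair hτ hU hU' (fun i => sq_nonneg (e i)) hω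
  obtain ⟨R, hRU, hRr, hR⟩ := exists_specPair (ptrB_posSemidef hτ) hV hV' hd
    ((ptr_ptrB τ).trans h)
  have hφ : ptrB (ptr τ ⊗ₖ (1 : Matrix C C ℂ)) = ptr (ptrB τ) ⊗ₖ (1 : Matrix C C ℂ) := by
    rw [ptrB_kron, ptr_ptrB]
  have hPR : P.Phi 0 - R.Phi 0 = ent (ptrB τ) - ent τ := by
    rw [hP, hR, ptr_ptrB]; linarith
  have key : ∀ f ∈ Submodule.span ℝ resolvents, ∃ K : Matrix (A × C) (A × C) ℂ,
      P.Rep f (emb B K) ∧ R.Rep f K := by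
    intro f hf
    induction hf using Submodule.span_induction with
    | mem f hf =>
      obtain ⟨t, ht, rfl⟩ := hf
      obtain ⟨K, h1, h2⟩ := exists_stationary P R rfl hφ hPR ht
      exact ⟨K, P.rep_of_stationary ht h1, R.rep_of_stationary ht h2⟩
    | zero =>
      refine ⟨0, ?_, SpecPair.Rep.zero R⟩
      have : emb B (0 : Matrix (A × C) (A × C) ℂ) = 0 := by ext p q; simp [emb_apply]
      rw [this]; exact SpecPair.Rep.zero P
    | add f f' _ _ h1 h2 =>
      obtain ⟨K, h3, h4⟩ := h1
      obtain ⟨K', h5, h6⟩ := h2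
      refine ⟨K + K', ?_, SpecPair.Rep.add R h4 h6⟩
      rw [emb_add]; exact SpecPair.Rep.add P h3 h5
    | smul c f _ h1 =>
      obtain ⟨K, h3, h4⟩ := h1
      refine ⟨(c : ℂ) • K, ?_, SpecPair.Rep.smul R c h4⟩
      rw [emb_smul]; exact SpecPair.Rep.smul P c h3
  let S : Finset ℝ := ((Finset.univ.image fun x : ((A × B) × C) × ((A × B) × C) =>
      P.r x.1 / P.s x.2) ∪ (Finset.univ.image fun x : (A × C) × (A × C) =>
      R.r x.1 / R.s x.2)).filter (fun x => 0 < x)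
  obtain ⟨f, hf, hfS⟩ := exists_interp S (fun x hx => (Finset.mem_filter.1 hx).2)
    (fun x => (Real.sqrt x)⁻¹)
  obtain ⟨K, hK, hK'⟩ := key f hf
  have h1 := P.sqrt_of_rep (fun i j hs hr => hfS _ (Finset.mem_filter.2
    ⟨Finset.mem_union_left _ (Finset.mem_image.2 ⟨(i, j), Finset.mem_univ _, rfl⟩),
      div_pos hr hs⟩)) hK
  have h2 := R.sqrt_of_rep (fun i j hs hr => hfS _ (Finset.mem_filter.2
    ⟨Finset.mem_union_right _ (Finset.mem_image.2 ⟨(i, j), Finset.mem_univ _, rfl⟩),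
      div_pos hr hs⟩)) hK'
  have h1' : P.U * diagonal (fun i => (Real.sqrt (P.r i) : ℂ)) * P.Uᴴ =
      q ⊗ₖ (1 : Matrix C C ℂ) := by
    rw [hPU, hPr, hqe, ← kron_diag]
    simp only [Real.sqrt_sq (he _)]
  have h2' : R.U * diagonal (fun i => (Real.sqrt (R.r i) : ℂ)) * R.Uᴴ =
      (V * diagonal (fun i => (Real.sqrt (d i) : ℂ)) * Vᴴ) ⊗ₖ (1 : Matrix C C ℂ) := by
    rw [hRU, hRr, ← kron_diag]
  rw [h1'] at h1
  rw [h2'] at h2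
  have h3 := P.sqrt_sq
  have h4 := R.sqrt_sq
  rw [← h1] at h3
  rw [← h2] at h4
  refine ⟨K * Kᴴ, by simp, ?_, ?_⟩
  · rw [Matrix.conjTranspose_mul, emb_conjTranspose, kron_one_conjTranspose, hq.1.eq] at h3
    rw [emb_mul]
    refine Eq.trans ?_ h3
    simp only [Matrix.mul_assoc]
  · rw [Matrix.conjTranspose_mul, kron_one_conjTranspose, diag_conj_conjTranspose] at h4
    refine Eq.trans ?_ h4
    simp only [Matrix.mul_assoc]

lemma trace_mul_kron (K : Matrix X X ℂ) (M : Matrix (X × Y) (X × Y) ℂ) :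
    (M * (K ⊗ₖ (1 : Matrix Y Y ℂ))).trace = (ptr M * K).trace := by
  rw [Matrix.trace_mul_comm, trace_kron_mul, Matrix.trace_mul_comm]

lemma mul_eq_zero_of_sq {n k : Type*} [Fintype n] [DecidableEq n] [Fintype k]
    {q : Matrix n n ℂ} (hq : q.IsHermitian) {N : Matrix n k ℂ} (h : q * q * N = 0) : q * N = 0 := by
  rw [← Matrix.conjTranspose_mul_self_eq_zero, Matrix.conjTranspose_mul, hq.eq, Matrix.mul_assoc,
    ← Matrix.mul_assoc q, h, Matrix.mul_zero]

/-- What annihilates a marginal annihilates the state. -/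
lemma mul_kron_eq_zero {M : Matrix (X × Y) (X × Y) ℂ} (hM : M.PosSemidef) {N : Matrix X X ℂ}
    (h : ptr M * N = 0) : M * (N ⊗ₖ (1 : Matrix Y Y ℂ)) = 0 := by
  apply posSemidef_mul_eq_zero hM
  rw [trace_mul_kron, kron_one_conjTranspose]
  have := ptr_conj Nᴴ (1 : Matrix X X ℂ) M
  rw [Matrix.one_kronecker_one, Matrix.mul_one, Matrix.mul_one] at this
  rw [this, Matrix.mul_assoc, h, Matrix.mul_zero, Matrix.trace_zero]

/-- Structure of the equality case of strong subadditivity, in terms of the square root `q`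
of the `AB`-marginal. -/
theorem eq_structure {τ : Matrix ((A × B) × C) ((A × B) × C) ℂ} (hτ : τ.PosSemidef)
    (heq : ent τ + ent (ptr (ptr τ)) = ent (ptr τ) + ent (ptrB τ))
    {q : Matrix (A × B) (A × B) ℂ} (hq : q.PosSemidef) (hqq : q * q = ptr τ) :
    ∃ T Z : Matrix (A × C) (A × C) ℂ, Tᴴ = T ∧
      emb B T * (q ⊗ₖ (1 : Matrix C C ℂ)) = (q ⊗ₖ (1 : Matrix C C ℂ)) * emb B Z ∧
      (q ⊗ₖ (1 : Matrix C C ℂ)) * emb B T * (q ⊗ₖ (1 : Matrix C C ℂ)) = τ ∧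
      ∀ N : Matrix A A ℂ, ptr (ptr τ) * N = 0 → T * (N ⊗ₖ (1 : Matrix C C ℂ)) = 0 := by
  obtain ⟨V, d, hV, hV', hd, h⟩ := exists_diag (ptr_posSemidef (ptr_posSemidef hτ))
  obtain ⟨T₀, hT₀, h1, h2⟩ := exists_sandwich hτ heq hq hqq hV hV' hd h
  -- square root, its pseudo-inverse and support projection of the `A`-marginal
  set p := V * diagonal (fun i => (Real.sqrt (d i) : ℂ)) * Vᴴ with hp
  set p' := V * diagonal (fun i => (((Real.sqrt (d i))⁻¹ : ℝ) : ℂ)) * Vᴴ with hp'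
  set S := V * diagonal (fun i => (((Real.sqrt (d i)) * (Real.sqrt (d i))⁻¹ : ℝ) : ℂ)) * Vᴴ with hS
  set D := V * diagonal (fun i => (((d i)⁻¹ : ℝ) : ℂ)) * Vᴴ with hD
  have hSc : Sᴴ = S := diag_conj_conjTranspose _ _
  have hpc : pᴴ = p := diag_conj_conjTranspose _ _
  have hpp' : p * p' = S := by
    rw [hp, hp', diag_conj_mul hV, hS]
    congr 3
    ext i
    push_cast
    ring
  have hpp : p * p = ptr (ptr τ) := by
    rw [hp, diag_conj_mul hV, h]
    congr 3
    ext i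
    rw [← Complex.ofReal_mul, Real.mul_self_sqrt (hd i)]
  have hSp : S * p = p := by
    rw [hp, hS, diag_conj_mul hV]
    congr 3
    ext i
    rw [← Complex.ofReal_mul]
    congr 1
    by_cases h0 : Real.sqrt (d i) = 0
    · simp [h0]
    · field_simp
  have hpS : p * S = p := by
    have := congrArg Matrix.conjTranspose hSp
    rwa [Matrix.conjTranspose_mul, hSc, hpc] at this
  have hDS : D * ptr (ptr τ) = S := by
    rw [h, hD, diag_conj_mul hV, hS]
    congr 3
    ext i
    rw [← Complex.ofReal_mul]
    congr 1
    rcases (hd i).eq_or_lt with h0 | h0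
    · simp [← h0]
    · have := (Real.sqrt_pos.2 h0).ne'
      field_simp
  have hqS : q * (S ⊗ₖ (1 : Matrix B B ℂ)) = q := by
    have e1 : ptr (ptr τ) * (S - 1) = 0 := by
      rw [← hpp, Matrix.mul_sub, Matrix.mul_assoc, hpS, Matrix.mul_one, sub_self]
    have e2 := mul_kron_eq_zero (ptr_posSemidef hτ) e1
    rw [← hqq] at e2
    have e3 := mul_eq_zero_of_sq hq.1 e2
    have e4 : (S - 1) ⊗ₖ (1 : Matrix B B ℂ) = S ⊗ₖ (1 : Matrix B B ℂ) - 1 := by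
      rw [← Matrix.one_kronecker_one]
      ext i j
      simp only [Matrix.sub_apply, Matrix.kroneckerMap_apply, sub_mul]
    rw [e4, Matrix.mul_sub, Matrix.mul_one, sub_eq_zero] at e3
    exact e3
  set P := S ⊗ₖ (1 : Matrix C C ℂ) with hP
  set p₁ := p ⊗ₖ (1 : Matrix C C ℂ) with hp₁
  set p₁' := p' ⊗ₖ (1 : Matrix C C ℂ) with hp₁'
  set Q := q ⊗ₖ (1 : Matrix C C ℂ) with hQ
  have hQP : Q * emb B P = Q := by rw [hP, emb_kron, hQ, ← kron_one_mul, hqS]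
  have hPc : Pᴴ = P := by rw [hP, kron_one_conjTranspose, hSc]
  have hQc : Qᴴ = Q := by rw [hQ, kron_one_conjTranspose, hq.1.eq]
  have hp₁c : p₁ᴴ = p₁ := by rw [hp₁, kron_one_conjTranspose, hpc]
  have hPQ : emb B P * Q = Q := by
    have := congrArg Matrix.conjTranspose hQP
    rwa [Matrix.conjTranspose_mul, emb_conjTranspose, hPc, hQc] at this
  have hPp : P * p₁ = p₁ := by rw [hP, hp₁, ← kron_one_mul, hSp]
  have hpP : p₁ * P = p₁ := by rw [hP, hp₁, ← kron_one_mul, hpS]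
  have hpp₁' : p₁ * p₁' = P := by rw [hp₁, hp₁', ← kron_one_mul, hpp']
  have hPP : P * P = P := by
    have : P * (p₁ * p₁') = p₁ * p₁' := by rw [← Matrix.mul_assoc, hPp]
    rwa [hpp₁'] at this
  set T := P * T₀ * P with hT
  have hTc : Tᴴ = T := by
    rw [hT, Matrix.conjTranspose_mul, Matrix.conjTranspose_mul, hPc, hT₀, Matrix.mul_assoc]
  have hPT : P * T = T := by
    rw [hT, ← Matrix.mul_assoc, ← Matrix.mul_assoc, hPP]
  have h3 : Q * emb B T * Q = τ := by
    rw [hT, emb_mul, emb_mul, ← h1]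
    calc _ = (Q * emb B P) * emb B T₀ * (emb B P * Q) := by simp only [Matrix.mul_assoc]
      _ = _ := by rw [hQP, hPQ]
  have h4 : p₁ * T * p₁ = ptrB τ := by
    rw [← h2, hT]
    calc _ = (p₁ * P) * T₀ * (P * p₁) := by simp only [Matrix.mul_assoc]
      _ = _ := by rw [hpP, hPp]
  set Z := p₁' * T * p₁ with hZ
  have h5 : T * p₁ = p₁ * Z := by
    rw [hZ, ← Matrix.mul_assoc, ← Matrix.mul_assoc, hpp₁', hPT]
  refine ⟨T, Z, hTc, ?_, h3, ?_⟩
  · rw [← sub_eq_zero, ← Matrix.trace_conjTranspose_mul_self_eq_zero_iff]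
    -- expand the squared norm; all four terms only involve `AC`-marginals
    have hQQ : Q * Q = ptr τ ⊗ₖ (1 : Matrix C C ℂ) := by rw [hQ, ← kron_one_mul, hqq]
    have hm : ptrB (Q * Q) = p₁ * p₁ := by
      rw [hQQ, ptrB_kron, hp₁, ← kron_one_mul, hpp]
    have e1 : ((emb B T * Q - Q * emb B Z)ᴴ * (emb B T * Q - Q * emb B Z)).trace =
        (emb B (T * T) * (Q * Q)).trace - (emb B Z * (Q * emb B T * Q)).trace
          - (emb B Zᴴ * (Q * emb B T * Q)).trace + (emb B (Z * Zᴴ) * (Q * Q)).trace := by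
      simp only [Matrix.conjTranspose_sub, Matrix.conjTranspose_mul, emb_conjTranspose, hQc, hTc,
        Matrix.sub_mul, Matrix.mul_sub, Matrix.trace_sub, emb_mul]
      have t1 : (Q * emb B T * (emb B T * Q)).trace = (emb B T * emb B T * (Q * Q)).trace := by
        rw [Matrix.mul_assoc, Matrix.trace_mul_comm]; simp only [Matrix.mul_assoc]
      have t2 : (Q * emb B T * (Q * emb B Z)).trace = (emb B Z * (Q * emb B T * Q)).trace := by
        rw [Matrix.trace_mul_comm (emb B Z)]; simp only [Matrix.mul_assoc]
      have t3 : (emb B Zᴴ * Q * (emb B T * Q)).trace = (emb B Zᴴ * (Q * emb B T * Q)).trace := by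
        simp only [Matrix.mul_assoc]
      have t4 : (emb B Zᴴ * Q * (Q * emb B Z)).trace = (emb B Z * emb B Zᴴ * (Q * Q)).trace := by
        rw [Matrix.mul_assoc (emb B Z), Matrix.trace_mul_comm (emb B Z)]
        simp only [Matrix.mul_assoc]
      rw [t1, t2, t3, t4]
      ring
    have e2 : ((T * p₁ - p₁ * Z)ᴴ * (T * p₁ - p₁ * Z)).trace =
        ((T * T) * (p₁ * p₁)).trace - (Z * (p₁ * T * p₁)).trace
          - (Zᴴ * (p₁ * T * p₁)).trace + ((Z * Zᴴ) * (p₁ * p₁)).trace := by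
      simp only [Matrix.conjTranspose_sub, Matrix.conjTranspose_mul, hp₁c, hTc,
        Matrix.sub_mul, Matrix.mul_sub, Matrix.trace_sub]
      have t1 : (p₁ * T * (T * p₁)).trace = (T * T * (p₁ * p₁)).trace := by
        rw [Matrix.mul_assoc, Matrix.trace_mul_comm]; simp only [Matrix.mul_assoc]
      have t2 : (p₁ * T * (p₁ * Z)).trace = (Z * (p₁ * T * p₁)).trace := by
        rw [Matrix.trace_mul_comm Z]; simp only [Matrix.mul_assoc]
      have t3 : (Zᴴ * p₁ * (T * p₁)).trace = (Zᴴ * (p₁ * T * p₁)).trace := by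
        simp only [Matrix.mul_assoc]
      have t4 : (Zᴴ * p₁ * (p₁ * Z)).trace = (Z * Zᴴ * (p₁ * p₁)).trace := by
        rw [Matrix.mul_assoc Z, Matrix.trace_mul_comm Z]
        simp only [Matrix.mul_assoc]
      rw [t1, t2, t3, t4]
      ring
    rw [e1, h3]
    simp only [trace_emb_mul]
    rw [hm, ← h4, ← e2, h5, sub_self]
    simp
  · intro N hN
    have e1 : S * N = 0 := by rw [← hDS, Matrix.mul_assoc, hN, Matrix.mul_zero]
    have e2 : P * (N ⊗ₖ (1 : Matrix C C ℂ)) = 0 := by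
      rw [hP, ← kron_one_mul, e1, Matrix.zero_kronecker]
    rw [hT, Matrix.mul_assoc, e2, Matrix.mul_zero]

end Eq

/-! ### States with `I(B;C|A) = I(A;C|B) = 0` -/

section Core
variable {n C : Type*} [Fintype n] [DecidableEq n]

/-- Two mutually commuting families of operators (think of operators on `A` and on `B`) that
have the same sandwich by `q`, and that can be moved through `q`, agree on the range of `q`. The
members of the first family then commute with each other on the range of `q`, and with `q`. -/
lemma core {q : Matrix n n ℂ} (hq : q.PosSemidef) {t z t' z' : C → C → Matrix n n ℂ}
    (ht : ∀ i j, (t i j)ᴴ = t j i)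
    (hz : ∀ i j, t i j * q = q * z i j)
    (hz' : ∀ i j, t' i j * q = q * z' i j)
    (hs : ∀ i j, q * t i j * q = q * t' i j * q)
    (c1 : ∀ i j k l, t i j * t' k l = t' k l * t i j)
    (c2 : ∀ i j k l, t i j * z' k l = z' k l * t i j) :
    (∀ i j, t i j * q = t' i j * q) ∧
    (∀ i j k l, t i j * t k l * q = t k l * t i j * q) ∧
    (∀ i j, t i j * q = q * t i j) := by
  have h1 : ∀ i j, q * z i j = q * z' i j := by
    intro i j
    have e := hs i j
    rw [Matrix.mul_assoc, hz, Matrix.mul_assoc, hz', ← Matrix.mul_assoc, ← Matrix.mul_assoc,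
      ← sub_eq_zero, ← Matrix.mul_sub] at e
    have e2 := mul_eq_zero_of_sq hq.1 e
    rwa [Matrix.mul_sub, sub_eq_zero] at e2
  have h2 : ∀ i j, t i j * q = t' i j * q := fun i j => by rw [hz, hz', h1]
  have h3 : ∀ i j k l, t i j * t k l * q = t k l * t i j * q := by
    intro i j k l
    calc t i j * t k l * q = t i j * t' k l * q := by rw [Matrix.mul_assoc, h2, Matrix.mul_assoc]
      _ = t' k l * (t i j * q) := by rw [c1, Matrix.mul_assoc]
      _ = t' k l * q * z i j := by rw [hz, Matrix.mul_assoc]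
      _ = t k l * (q * z i j) := by rw [← h2, Matrix.mul_assoc]
      _ = t k l * t i j * q := by rw [← hz, Matrix.mul_assoc]
  refine ⟨h2, h3, fun i j => ?_⟩
  have hzc : (z i j)ᴴ * q = q * t j i := by
    have := congrArg Matrix.conjTranspose (hz i j)
    rw [Matrix.conjTranspose_mul, Matrix.conjTranspose_mul, hq.1.eq, ht] at this
    exact this.symm
  -- `q z tᴴ = q tᴴ z`, passing through the other family
  have h4 : q * z i j * t j i = q * t j i * z i j := by
    calc q * z i j * t j i = q * (z' i j * t j i) := by rw [h1, Matrix.mul_assoc]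
      _ = q * t j i * z' i j := by rw [← c2, Matrix.mul_assoc]
      _ = (z i j)ᴴ * (q * z' i j) := by rw [← hzc, Matrix.mul_assoc]
      _ = q * t j i * z i j := by rw [← h1, ← Matrix.mul_assoc, hzc]
  have h5 : q * (z i j - t i j) = 0 := by
    apply posSemidef_mul_eq_zero hq
    have e1 : (z i j - t i j)ᴴ * q * (z i j - t i j) =
        q * t j i * z i j - q * t j i * t i j - t j i * (q * z i j) + t j i * q * t i j := by
      rw [Matrix.conjTranspose_sub, Matrix.sub_mul, hzc, ht]
      simp only [Matrix.sub_mul, Matrix.mul_sub, Matrix.mul_assoc]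
      abel
    have e2 : (q * t j i * t i j).trace = (t j i * t i j * q).trace := by
      rw [Matrix.mul_assoc, Matrix.trace_mul_comm]
    have e3 : (t j i * q * t i j).trace = (t j i * t i j * q).trace := by
      rw [Matrix.trace_mul_comm, ← Matrix.mul_assoc, h3]
    have e4 : (q * t j i * z i j).trace = (t j i * t i j * q).trace := by
      rw [← h4, ← hz, Matrix.trace_mul_comm, ← Matrix.mul_assoc]
    rw [e1, Matrix.trace_add, Matrix.trace_sub, Matrix.trace_sub, e2, e3, e4, ← hz,
      ← Matrix.mul_assoc]
    ring
  rw [hz]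
  rw [Matrix.mul_sub, sub_eq_zero] at h5
  exact h5

end Core

section Struct
variable {X A B C : Type*} [Fintype X] [DecidableEq X]
  [Fintype A] [DecidableEq A] [Fintype B] [DecidableEq B] [Fintype C] [DecidableEq C]

/-- The `(i, j)` block, an operator on `X`, of an operator on `X ⊗ C`. -/
def blk {X C : Type*} (M : Matrix (X × C) (X × C) ℂ) (i j : C) : Matrix X X ℂ :=
  Matrix.of fun x x' => M (x, i) (x', j)

lemma blk_mul_kron (M : Matrix (X × C) (X × C) ℂ) (K : Matrix X X ℂ) (i j : C) :
    blk (M * (K ⊗ₖ (1 : Matrix C C ℂ))) i j = blk M i j * K := by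
  ext x x'
  simp [blk, Matrix.mul_apply, Fintype.sum_prod_type, Matrix.kroneckerMap_apply,
    Matrix.one_apply]

lemma blk_kron_mul (M : Matrix (X × C) (X × C) ℂ) (K : Matrix X X ℂ) (i j : C) :
    blk ((K ⊗ₖ (1 : Matrix C C ℂ)) * M) i j = K * blk M i j := by
  ext x x'
  simp [blk, Matrix.mul_apply, Fintype.sum_prod_type, Matrix.kroneckerMap_apply,
    Matrix.one_apply]

lemma blk_emb (T : Matrix (A × C) (A × C) ℂ) (i j : C) :
    blk (emb B T) i j = blk T i j ⊗ₖ (1 : Matrix B B ℂ) := by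
  ext x x'
  simp [blk, emb_apply, Matrix.kroneckerMap_apply, Matrix.one_apply]

lemma blk_conjTranspose (T : Matrix (X × C) (X × C) ℂ) (i j : C) :
    (blk T i j)ᴴ = blk Tᴴ j i := rfl

lemma blk_ptrB (M : Matrix ((A × B) × C) ((A × B) × C) ℂ) (i j : C) :
    blk (ptrB M) i j = ptr (blk M i j) := rfl

/-- Block form of `eq_structure`. -/
lemma eq_blocks {τ : Matrix ((A × B) × C) ((A × B) × C) ℂ} (hτ : τ.PosSemidef)
    (heq : ent τ + ent (ptr (ptr τ)) = ent (ptr τ) + ent (ptrB τ))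
    {q : Matrix (A × B) (A × B) ℂ} (hq : q.PosSemidef) (hqq : q * q = ptr τ) :
    ∃ t z : C → C → Matrix A A ℂ, (∀ i j, (t i j)ᴴ = t j i) ∧
      (∀ i j, (t i j ⊗ₖ (1 : Matrix B B ℂ)) * q = q * (z i j ⊗ₖ (1 : Matrix B B ℂ))) ∧
      (∀ i j, q * (t i j ⊗ₖ (1 : Matrix B B ℂ)) * q = blk τ i j) ∧
      ∀ N : Matrix A A ℂ, ptr (ptr τ) * N = 0 → ∀ i j, t i j * N = 0 := by
  obtain ⟨T, Z, h1, h2, h3, h4⟩ := eq_structure hτ heq hq hqq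
  refine ⟨blk T, blk Z, fun i j => ?_, fun i j => ?_, fun i j => ?_, fun N hN i j => ?_⟩
  · rw [blk_conjTranspose, h1]
  · rw [← blk_emb, ← blk_emb, ← blk_mul_kron, ← blk_kron_mul, h2]
  · rw [← h3, blk_mul_kron, blk_kron_mul, blk_emb]
  · rw [← blk_mul_kron, h4 N hN]
    rfl

lemma ptr_kron_mul (K : Matrix A A ℂ) (M : Matrix (A × B) (A × B) ℂ) :
    ptr ((K ⊗ₖ (1 : Matrix B B ℂ)) * M) = K * ptr M := by
  have := ptr_conj K (1 : Matrix A A ℂ) M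
  rwa [Matrix.one_kronecker_one, Matrix.mul_one, Matrix.mul_one] at this

lemma ptr_mul_kron (K : Matrix A A ℂ) (M : Matrix (A × B) (A × B) ℂ) :
    ptr (M * (K ⊗ₖ (1 : Matrix B B ℂ))) = ptr M * K := by
  have := ptr_conj (1 : Matrix A A ℂ) K M
  rwa [Matrix.one_kronecker_one, Matrix.one_mul, Matrix.one_mul] at this

/-- Commutation on the range of `q` becomes commutation, because the operators vanish off the
support of the `A`-marginal. -/
lemma comm_of_weak {q : Matrix (A × B) (A × B) ℂ} (hq : q.PosSemidef)
    {t : C → C → Matrix A A ℂ}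
    (hN : ∀ N : Matrix A A ℂ, ptr (q * q) * N = 0 → ∀ i j, t i j * N = 0)
    (h : ∀ i j k l, (t i j ⊗ₖ (1 : Matrix B B ℂ)) * (t k l ⊗ₖ (1 : Matrix B B ℂ)) * q =
      (t k l ⊗ₖ (1 : Matrix B B ℂ)) * (t i j ⊗ₖ (1 : Matrix B B ℂ)) * q) (i j k l : C) :
    t i j * t k l = t k l * t i j := by
  have h1 : ((t i j * t k l - t k l * t i j) ⊗ₖ (1 : Matrix B B ℂ)) * q = 0 := by
    have e : (t i j * t k l - t k l * t i j) ⊗ₖ (1 : Matrix B B ℂ) =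
        (t i j * t k l) ⊗ₖ (1 : Matrix B B ℂ) - (t k l * t i j) ⊗ₖ (1 : Matrix B B ℂ) := by
      ext x y
      simp only [Matrix.sub_apply, Matrix.kroneckerMap_apply, sub_mul]
    rw [e, Matrix.sub_mul, kron_one_mul, kron_one_mul, h, sub_self]
  set M := t i j * t k l - t k l * t i j with hM
  have h2 : ptr (q * q) * Mᴴ = 0 := by
    rw [← ptr_mul_kron, ← kron_one_conjTranspose]
    have := congrArg Matrix.conjTranspose h1
    rw [Matrix.conjTranspose_mul, hq.1.eq, Matrix.conjTranspose_zero] at this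
    rw [Matrix.mul_assoc, this, Matrix.mul_zero]
    ext; simp [ptr]
  have h3 : M * Mᴴ = 0 := by
    conv_lhs => rw [hM]
    rw [Matrix.sub_mul, Matrix.mul_assoc, Matrix.mul_assoc, hN _ h2, hN _ h2]
    simp
  rw [Matrix.self_mul_conjTranspose_eq_zero] at h3
  exact sub_eq_zero.1 h3

/-- Exchange of the first two tensor factors. -/
def sw12 (A B C : Type*) : (B × A) × C ≃ (A × B) × C where
  toFun p := ((p.1.2, p.1.1), p.2)
  invFun p := ((p.1.2, p.1.1), p.2)
  left_inv _ := rfl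
  right_inv _ := rfl

lemma swap_kron (K : Matrix B B ℂ) :
    (K ⊗ₖ (1 : Matrix A A ℂ)).submatrix (Equiv.prodComm A B) (Equiv.prodComm A B) =
      (1 : Matrix A A ℂ) ⊗ₖ K := by
  ext x y
  exact mul_comm _ _

/-- If `I(B;C|A) = 0 = I(A;C|B)`, there are commuting operators `t i j` on `A`, acting on
the `AB`-marginal in the same way as commuting operators `t' i j` on `B`, such that the blocks of
the `AC`-marginal are `t i j` times the `A`-marginal. -/
theorem double_markov {τ : Matrix ((A × B) × C) ((A × B) × C) ℂ} (hτ : τ.PosSemidef)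
    (hA : ent τ + ent (ptr (ptr τ)) = ent (ptr τ) + ent (ptrB τ))
    (hB : ent τ + ent (ptr (ptr (τ.submatrix (sw12 A B C) (sw12 A B C)))) =
      ent (ptr τ) + ent (ptrB (τ.submatrix (sw12 A B C) (sw12 A B C)))) :
    ∃ (t : C → C → Matrix A A ℂ) (t' : C → C → Matrix B B ℂ),
      (∀ i j, (t i j)ᴴ = t j i) ∧ (∀ i j, (t' i j)ᴴ = t' j i) ∧
      (∀ i j k l, t i j * t k l = t k l * t i j) ∧
      (∀ i j k l, t' i j * t' k l = t' k l * t' i j) ∧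
      (∀ i j, (t i j ⊗ₖ (1 : Matrix B B ℂ)) * ptr τ = ((1 : Matrix A A ℂ) ⊗ₖ t' i j) * ptr τ) ∧
      (∀ i j, t i j * ptr (ptr τ) = ptr (ptr τ) * t i j) ∧
      (∀ i j, blk (ptrB τ) i j = ptr (ptr τ) * t i j) := by
  obtain ⟨q, hq, hqq⟩ := exists_sqrt (ptr_posSemidef hτ)
  obtain ⟨t, z, h1, h2, h3, h4⟩ := eq_blocks hτ hA hq hqq
  set e := Equiv.prodComm B A with he
  set e' := Equiv.prodComm A B with he'
  have hpt : ptr (τ.submatrix (sw12 A B C) (sw12 A B C)) = (ptr τ).submatrix e e := rfl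
  have hq' : (q.submatrix e e).PosSemidef := hq.submatrix _
  have hqq' : q.submatrix e e * q.submatrix e e =
      ptr (τ.submatrix (sw12 A B C) (sw12 A B C)) := by
    rw [hpt, Matrix.submatrix_mul_equiv, hqq]
  obtain ⟨t', z', g1, g2, g3, g4⟩ := eq_blocks (hτ.submatrix (sw12 A B C)) (by
    rw [ent_submatrix (sw12 A B C), hB]
    congr 1
    rw [hpt, ent_submatrix]) hq' hqq'
  have hqe : (q.submatrix e e).submatrix e' e' = q := rfl
  have g2' : ∀ i j, ((1 : Matrix A A ℂ) ⊗ₖ t' i j) * q = q * ((1 : Matrix A A ℂ) ⊗ₖ z' i j) := by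
    intro i j
    have := congrArg (fun M => M.submatrix e' e') (g2 i j)
    rw [← Matrix.submatrix_mul_equiv _ _ _ e', ← Matrix.submatrix_mul_equiv _ _ _ e', hqe,
      swap_kron, swap_kron] at this
    exact this
  have g3' : ∀ i j, q * ((1 : Matrix A A ℂ) ⊗ₖ t' i j) * q = blk τ i j := by
    intro i j
    have := congrArg (fun M => M.submatrix e' e') (g3 i j)
    rw [← Matrix.submatrix_mul_equiv _ _ _ e', ← Matrix.submatrix_mul_equiv _ _ _ e', hqe,
      swap_kron] at this
    exact this
  have cm : ∀ (K : Matrix A A ℂ) (L : Matrix B B ℂ), (K ⊗ₖ (1 : Matrix B B ℂ)) *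
      ((1 : Matrix A A ℂ) ⊗ₖ L) = ((1 : Matrix A A ℂ) ⊗ₖ L) * (K ⊗ₖ (1 : Matrix B B ℂ)) := by
    intro K L
    rw [← Matrix.mul_kronecker_mul, ← Matrix.mul_kronecker_mul]
    simp
  obtain ⟨k1, k2, k3⟩ := core hq
    (t := fun i j => t i j ⊗ₖ (1 : Matrix B B ℂ)) (z := fun i j => z i j ⊗ₖ (1 : Matrix B B ℂ))
    (t' := fun i j => (1 : Matrix A A ℂ) ⊗ₖ t' i j) (z' := fun i j => (1 : Matrix A A ℂ) ⊗ₖ z' i j)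
    (fun i j => by rw [kron_one_conjTranspose, h1]) h2 g2' (fun i j => by rw [h3, g3'])
    (fun i j k l => cm _ _) (fun i j k l => cm _ _)
  -- the same statement with the roles of `A` and `B` exchanged
  obtain ⟨-, l2, -⟩ := core hq
    (t := fun i j => (1 : Matrix A A ℂ) ⊗ₖ t' i j) (z := fun i j => (1 : Matrix A A ℂ) ⊗ₖ z' i j)
    (t' := fun i j => t i j ⊗ₖ (1 : Matrix B B ℂ)) (z' := fun i j => z i j ⊗ₖ (1 : Matrix B B ℂ))
    (fun i j => by rw [Matrix.conjTranspose_kronecker, Matrix.conjTranspose_one, g1]) g2' h2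
    (fun i j => by rw [h3, g3'])
    (fun i j k l => (cm _ _).symm) (fun i j k l => (cm _ _).symm)
  have l2' : ∀ i j k l, (t' i j ⊗ₖ (1 : Matrix A A ℂ)) * (t' k l ⊗ₖ (1 : Matrix A A ℂ)) *
      q.submatrix e e = (t' k l ⊗ₖ (1 : Matrix A A ℂ)) * (t' i j ⊗ₖ (1 : Matrix A A ℂ)) *
        q.submatrix e e := by
    intro i j k l
    have := congrArg (fun M => M.submatrix e e) (l2 i j k l)
    simp only [← Matrix.submatrix_mul_equiv _ _ _ e] at this
    have hsw : ∀ K : Matrix B B ℂ, ((1 : Matrix A A ℂ) ⊗ₖ K).submatrix e e =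
        K ⊗ₖ (1 : Matrix A A ℂ) := by
      intro K
      rw [← swap_kron]; rfl
    simpa only [hsw] using this
  have k4 : ∀ i j, (t i j ⊗ₖ (1 : Matrix B B ℂ)) * ptr τ = ptr τ * (t i j ⊗ₖ (1 : Matrix B B ℂ)) := by
    intro i j
    have := k3 i j
    rw [← hqq, ← Matrix.mul_assoc, this, Matrix.mul_assoc, this, Matrix.mul_assoc]
  refine ⟨t, t', h1, g1, comm_of_weak hq (by rw [hqq]; exact h4) k2,
    comm_of_weak hq' (by rw [hqq']; exact g4) l2', fun i j => ?_, fun i j => ?_, fun i j => ?_⟩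
  · rw [← hqq, ← Matrix.mul_assoc, ← Matrix.mul_assoc]
    have := k1 i j
    rw [this]
  · rw [← ptr_kron_mul, ← ptr_mul_kron, k4]
  · have := k3 i j
    rw [blk_ptrB, ← h3, Matrix.mul_assoc, this, ← Matrix.mul_assoc, hqq, ptr_mul_kron]

end Struct

/-! ### Simultaneous diagonalization -/

section SimDiag
variable {A : Type*} [Fintype A] [DecidableEq A]

/-- A pairwise commuting family of Hermitian matrices is diagonal in a common orthonormal basis. -/
lemma simDiag {ι : Type*} (T : ι → Matrix A A ℂ) (hT : ∀ i, (T i).IsHermitian)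
    (hC : ∀ i j, T i * T j = T j * T i) :
    ∃ (U : Matrix A A ℂ) (α : ι → A → ℂ), Uᴴ * U = 1 ∧ U * Uᴴ = 1 ∧
      ∀ i, T i = U * diagonal (α i) * Uᴴ := by
  classical
  let L : ι → (EuclideanSpace ℂ A →ₗ[ℂ] EuclideanSpace ℂ A) := fun i => toEuclideanLin (T i)
  have hL : ∀ i, (L i).IsSymmetric := fun i => Matrix.isSymmetric_toEuclideanLin_iff.2 (hT i)
  have hLC : Pairwise (Function.onFun Commute L) := by
    intro i j _
    show L i * L j = L j * L i
    ext x
    simp [L, toEuclideanLin, Matrix.mulVec_mulVec, hC i j]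
  have hinternal := LinearMap.IsSymmetric.directSum_isInternal_of_pairwise_commute hL hLC
  have hort := LinearMap.IsSymmetric.orthogonalFamily_iInf_eigenspaces hL
  let v := fun χ : ι → ℂ => stdOrthonormalBasis ℂ
    (⨅ j, Module.End.eigenspace (L j) (χ j) : Submodule ℂ (EuclideanSpace ℂ A))
  let b := hinternal.collectedBasis fun χ => (v χ).toBasis
  have hbo : Orthonormal ℂ b := hinternal.collectedBasis_orthonormal hort
    (fun χ => by simp)
  have : Fintype (Σ χ : ι → ℂ, Fin (Module.finrank ℂ
    (⨅ j, Module.End.eigenspace (L j) (χ j) : Submodule ℂ (EuclideanSpace ℂ A)))) :=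
    FiniteDimensional.fintypeBasisIndex b
  have hcard := Module.finrank_eq_card_basis b
  rw [finrank_euclideanSpace] at hcard
  let e := Fintype.equivOfCardEq hcard
  let c := (b.toOrthonormalBasis hbo).reindex e.symm
  have hc : ∀ a i, toEuclideanLin (T i) (c a) = (e a).1 i • c a := by
    intro a i
    have h1 : c a = b (e a) := by simp [c]
    have h2 := hinternal.collectedBasis_mem (fun χ => (v χ).toBasis) (e a)
    rw [Submodule.mem_iInf] at h2
    have h3 := Module.End.mem_eigenspace_iff.1 (h2 i)
    rw [h1]
    exact h3
  let U : Matrix A A ℂ := of fun x a => c a x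
  have hU : Uᴴ * U = 1 := by
    ext a a'
    have := orthonormal_iff_ite.1 c.orthonormal a a'
    rw [Matrix.one_apply, ← this]
    simp [U, Matrix.mul_apply, PiLp.inner_apply, mul_comm]
  have hU' : U * Uᴴ = 1 := mul_eq_one_comm.1 hU
  refine ⟨U, fun i a => (e a).1 i, hU, hU', fun i => ?_⟩
  have h : T i * U = U * diagonal (fun a => (e a).1 i) := by
    ext x a
    have := congrArg (fun w => w x) (hc a i)
    rw [Matrix.mul_diagonal]
    simpa [toEuclideanLin, Matrix.mulVec, dotProduct, U, Matrix.mul_apply, mul_comm] using this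
  rw [← h, Matrix.mul_assoc, hU', Matrix.mul_one]

/-- Simultaneous diagonalization for a commuting self-adjoint system of matrices `t i j` together
with one more commuting Hermitian matrix `R`. -/
lemma simDiag_system {E : Type*} (t : E → E → Matrix A A ℂ) (R : Matrix A A ℂ)
    (ht : ∀ i j, (t i j)ᴴ = t j i) (hR : R.IsHermitian)
    (hC : ∀ i j k l, t i j * t k l = t k l * t i j) (hRC : ∀ i j, t i j * R = R * t i j) :
    ∃ (U : Matrix A A ℂ) (α : A → Matrix E E ℂ) (r : A → ℝ), Uᴴ * U = 1 ∧ U * Uᴴ = 1 ∧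
      (∀ a, (α a).IsHermitian) ∧ (∀ i j, t i j = U * diagonal (fun a => α a i j) * Uᴴ) ∧
      R = U * diagonal (fun a => (r a : ℂ)) * Uᴴ := by
  let T : Option (Bool × E × E) → Matrix A A ℂ := fun o => match o with
    | none => R
    | some (true, i, j) => t i j + t j i
    | some (false, i, j) => Complex.I • (t i j - t j i)
  have hT : ∀ o, (T o).IsHermitian := by
    rintro (_ | ⟨_ | _, i, j⟩)
    · exact hR
    · simp only [T, IsHermitian, conjTranspose_smul, conjTranspose_sub, ht]
      rw [← neg_sub (t i j), smul_neg]
      simp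
    · simp only [T, IsHermitian, conjTranspose_add, ht]
      exact add_comm _ _
  have hTC : ∀ o o', T o * T o' = T o' * T o := by
    have aux : ∀ X : Matrix A A ℂ, (∀ i j, Commute X (t i j)) → Commute X R →
        ∀ o, Commute X (T o) := by
      rintro X hX hX' (_ | ⟨_ | _, i, j⟩)
      · exact hX'
      · exact ((hX i j).sub_right (hX j i)).smul_right _
      · exact (hX i j).add_right (hX j i)
    have h1 : ∀ i j o, Commute (t i j) (T o) := fun i j =>
      aux _ (fun k l => hC i j k l) (hRC i j)
    have h2 : ∀ o, Commute R (T o) := aux R (fun k l => (hRC k l).symm) (Commute.refl R)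
    exact fun o o' => aux (T o) (fun i j => (h1 i j o).symm) (h2 o).symm o'
  obtain ⟨U, α, hU, hU', h⟩ := simDiag T hT hTC
  have hd : ∀ (X : Matrix A A ℂ) (d : A → ℂ), X = U * diagonal d * Uᴴ → Uᴴ * X * U = diagonal d := by
    rintro X d rfl
    rw [show Uᴴ * (U * diagonal d * Uᴴ) * U = (Uᴴ * U) * diagonal d * (Uᴴ * U) by
      simp only [Matrix.mul_assoc], hU, Matrix.one_mul, Matrix.mul_one]
  have hij : ∀ i j, t i j = U * diagonal (fun a =>
      (1 / 2 : ℂ) * (α (some (true, i, j)) a - Complex.I * α (some (false, i, j)) a)) * Uᴴ := by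
    intro i j
    have e : diagonal (fun a =>
      (1 / 2 : ℂ) * (α (some (true, i, j)) a - Complex.I * α (some (false, i, j)) a)) =
      (1 / 2 : ℂ) • (diagonal (α (some (true, i, j)))
        - Complex.I • diagonal (α (some (false, i, j)))) := by
      ext a b
      by_cases hab : a = b
      · subst hab; simp
      · simp [hab]
    rw [e, Matrix.mul_smul, Matrix.smul_mul, Matrix.mul_sub, Matrix.sub_mul, Matrix.mul_smul,
      Matrix.smul_mul, ← h, ← h]
    simp only [T, smul_smul, Complex.I_mul_I]
    rw [neg_one_smul, sub_neg_eq_add, add_add_sub_cancel, ← two_smul ℂ (t i j), smul_smul]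
    norm_num
  refine ⟨U, fun a => of fun i j => (1 / 2 : ℂ) *
    (α (some (true, i, j)) a - Complex.I * α (some (false, i, j)) a), fun a => (α none a).re,
    hU, hU', ?_, ?_, ?_⟩
  · intro a
    ext i j
    have h1 := hd _ _ (hij i j)
    have h2 := hd _ _ (hij j i)
    have h3 : (Uᴴ * t j i * U)ᴴ = Uᴴ * t i j * U := by
      simp only [conjTranspose_mul, conjTranspose_conjTranspose, Matrix.mul_assoc, ht]
    rw [h1, h2, diagonal_conjTranspose, diagonal_eq_diagonal_iff] at h3
    exact h3 a
  · intro i j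
    exact hij i j
  · have h1 := hd _ _ (h none)
    have h2 : diagonal (α none) = diagonal (fun a => (((α none a).re : ℝ) : ℂ)) := by
      rw [diagonal_eq_diagonal_iff]
      intro a
      have h4 : (Uᴴ * R * U).IsHermitian := isHermitian_conjTranspose_mul_mul U hR
      rw [show Uᴴ * R * U = diagonal (α none) from h1] at h4
      have := h4.apply a a
      rw [diagonal_apply_eq] at this
      exact (Complex.conj_eq_iff_re.1 this).symm
    rw [← h2]
    exact h none

end SimDiag

/-! ### Measuring a subsystem -/

section Measure
variable {A B D E Y J : Type*} [Fintype A] [DecidableEq A] [Fintype B] [DecidableEq B]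
  [Fintype D] [DecidableEq D] [Fintype E] [DecidableEq E] [Fintype Y] [DecidableEq Y]
  [Fintype J] [DecidableEq J]

/-- A projective measurement: mutually orthogonal Hermitian projections summing to `1`. -/
structure IsPVM (P : J → Matrix A A ℂ) : Prop where
  herm : ∀ j, (P j)ᴴ = P j
  orth : ∀ j k, P j * P k = if j = k then P j else 0
  sum : ∑ j, P j = 1

/-- The isometry `∑ⱼ |j⟩ ⊗ P j` from `A ⊗ Y` to `J ⊗ Y ⊗ A`. -/
def measV (Y : Type*) [DecidableEq Y] (P : J → Matrix A A ℂ) :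
    Matrix ((J × Y) × A) (A × Y) ℂ :=
  of fun p q => if p.1.2 = q.2 then P p.1.1 p.2 q.1 else 0

lemma measV_isometry {P : J → Matrix A A ℂ} (hP : IsPVM P) :
    (measV Y P)ᴴ * measV Y P = 1 := by
  ext p q
  have h : ∑ j, (P j)ᴴ * P j = 1 := by simp [hP.herm, hP.orth, hP.sum]
  have h' := congrFun (congrFun h p.1) q.1
  simp only [Matrix.sum_apply, Matrix.mul_apply, conjTranspose_apply] at h'
  simp only [Matrix.mul_apply, conjTranspose_apply, measV, of_apply, Fintype.sum_prod_type]
  obtain ⟨a, y⟩ := p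
  obtain ⟨a', y'⟩ := q
  have e : ∀ (j : J) (x : Y) (z : A), star (if x = y then P j z a else 0) *
      (if x = y' then P j z a' else 0) =
      if x = y then (if y = y' then star (P j z a) * P j z a' else 0) else 0 := by
    intro j x z
    split_ifs <;> simp_all
  simp only [e]
  simp only [Finset.sum_comm (s := (Finset.univ : Finset Y)), Finset.sum_ite_eq',
    Finset.mem_univ, if_true]
  by_cases hy : y = y'
  · simp only [hy, if_true]
    rw [h']
    simp [Matrix.one_apply, hy]
  · simp [hy]

/-- The state after coherently recording the outcome of the measurement `P` on `A` in `J`. -/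
def isplit (P : J → Matrix A A ℂ) (M : Matrix (A × Y) (A × Y) ℂ) :
    Matrix ((J × Y) × A) ((J × Y) × A) ℂ := measV Y P * M * (measV Y P)ᴴ

lemma isplit_apply {P : J → Matrix A A ℂ} (hP : IsPVM P) (M : Matrix (A × Y) (A × Y) ℂ)
    (p q : (J × Y) × A) :
    isplit P M p q = (P p.1.1 * blk M p.1.2 q.1.2 * P q.1.1) p.2 q.2 := by
  have h : ∀ j x z, star (P j x z) = P j z x := fun j x z =>
    congrFun (congrFun (hP.herm j) z) x
  simp only [isplit, Matrix.mul_apply, measV, of_apply, conjTranspose_apply,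
    Fintype.sum_prod_type, blk, apply_ite star, star_zero, h, ite_mul, mul_ite, mul_zero,
    zero_mul, Finset.sum_ite_eq, Finset.mem_univ, if_true]

lemma ent_isplit {P : J → Matrix A A ℂ} (hP : IsPVM P) (M : Matrix (A × Y) (A × Y) ℂ) :
    ent (isplit P M) = ent M := ent_isometry _ (measV_isometry hP) M

lemma isplit_posSemidef (P : J → Matrix A A ℂ) {M : Matrix (A × Y) (A × Y) ℂ}
    (hM : M.PosSemidef) : (isplit P M).PosSemidef := hM.mul_mul_conjTranspose_same _

/-- The joint state of the measurement outcome `J` and `Y` after measuring `A` with `P`. -/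
def meas (P : J → Matrix A A ℂ) (M : Matrix (A × Y) (A × Y) ℂ) : Matrix (J × Y) (J × Y) ℂ :=
  ptr (isplit P M)

/-- The distribution of the measurement outcome, as a diagonal state on `J`. -/
def measJ (P : J → Matrix A A ℂ) (R : Matrix A A ℂ) : Matrix J J ℂ :=
  of fun j k => (P j * R * P k).trace

lemma meas_apply {P : J → Matrix A A ℂ} (hP : IsPVM P) (M : Matrix (A × Y) (A × Y) ℂ)
    (p q : J × Y) : meas P M p q = (P p.1 * blk M p.2 q.2 * P q.1).trace := by
  simp only [meas, ptr, of_apply, isplit_apply hP, Matrix.trace, diag_apply]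

lemma trace_pvm {P : J → Matrix A A ℂ} (hP : IsPVM P) (R : Matrix A A ℂ) (j k : J) :
    (P j * R * P k).trace = if j = k then (P j * R).trace else 0 := by
  rw [Matrix.trace_mul_comm, ← Matrix.mul_assoc, hP.orth]
  by_cases h : j = k
  · simp [h]
  · simp [h, Ne.symm h]

lemma meas_apply' {P : J → Matrix A A ℂ} (hP : IsPVM P) (M : Matrix (A × Y) (A × Y) ℂ)
    (p q : J × Y) :
    meas P M p q = if p.1 = q.1 then (P p.1 * blk M p.2 q.2).trace else 0 := by
  rw [meas_apply hP, trace_pvm hP]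

lemma meas_posSemidef (P : J → Matrix A A ℂ) {M : Matrix (A × Y) (A × Y) ℂ}
    (hM : M.PosSemidef) : (meas P M).PosSemidef := ptr_posSemidef (isplit_posSemidef P hM)

/-- Tracing out `B` from `A ⊗ (D ⊗ B)`. -/
def trR (M : Matrix (A × (D × B)) (A × (D × B)) ℂ) : Matrix (A × D) (A × D) ℂ :=
  ptr (M.submatrix (Equiv.prodAssoc A D B) (Equiv.prodAssoc A D B))

/-- Tracing out `D` from `A ⊗ (D ⊗ B)`. -/
def trM (M : Matrix (A × (D × B)) (A × (D × B)) ℂ) : Matrix (A × B) (A × B) ℂ :=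
  ptrB (M.submatrix (Equiv.prodAssoc A D B) (Equiv.prodAssoc A D B))

lemma blk_trR (M : Matrix (A × (D × B)) (A × (D × B)) ℂ) (d d' : D) :
    blk (trR M) d d' = ∑ b, blk M (d, b) (d', b) := by
  ext x y
  simp [blk, trR, ptr, Matrix.sum_apply]

lemma blk_trM (M : Matrix (A × (D × B)) (A × (D × B)) ℂ) (b b' : B) :
    blk (trM M) b b' = ∑ d, blk M (d, b) (d, b') := by
  ext x y
  simp [blk, trM, ptrB, Matrix.sum_apply]

lemma ptr_eq_sum_blk (M : Matrix (A × Y) (A × Y) ℂ) : ptr M = ∑ y, blk M y y := by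
  ext x y
  simp [blk, ptr, Matrix.sum_apply]

/-- Strong subadditivity after coherently recording the outcome `J` of a measurement of `A`, with
`J` joined to `D`: `S(ADB) + S(JD) ≤ S(AD) + S(JDB)`. The record does not change `S(ADB)` and
`S(AD)`. -/
lemma ssa_isplit {P : J → Matrix A A ℂ} (hP : IsPVM P)
    {M : Matrix (A × (D × B)) (A × (D × B)) ℂ} (hM : M.PosSemidef) :
    ent M + ent (meas P (trR M)) ≤ ent (trR M) + ent (meas P M) := by
  let e : ((J × D) × A) × B ≃ (J × (D × B)) × A :=
    { toFun := fun p => ((p.1.1.1, (p.1.1.2, p.2)), p.1.2)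
      invFun := fun p => (((p.1.1, p.1.2.1), p.2), p.1.2.2)
      left_inv := fun _ => rfl
      right_inv := fun _ => rfl }
  have h := ssa (τ := (isplit P M).submatrix e e) ((isplit_posSemidef P hM).submatrix e)
  have h1 : ptr ((isplit P M).submatrix e e) = isplit P (trR M) := by
    ext p q
    simp only [ptr, of_apply, submatrix_apply, isplit_apply hP, blk_trR, e, Equiv.coe_fn_mk,
      Matrix.mul_sum, Matrix.sum_mul, Matrix.sum_apply]
  have h2 : ptrB ((isplit P M).submatrix e e) =
      (meas P M).submatrix (Equiv.prodAssoc J D B) (Equiv.prodAssoc J D B) := by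
    ext p q
    simp only [ptrB, of_apply, submatrix_apply, meas, ptr, e, Equiv.coe_fn_mk,
      Equiv.prodAssoc_apply]
  rw [ent_submatrix, ent_isplit hP, h1, h2, ent_submatrix, ent_isplit hP] at h
  exact h

/-- Strong subadditivity for the measured state, conditioned on the outcome. -/
lemma ssa_meas {P : J → Matrix A A ℂ} (hP : IsPVM P)
    {M : Matrix (A × (D × E)) (A × (D × E)) ℂ} (hM : M.PosSemidef) :
    ent (meas P M) + ent (measJ P (ptr (trR M))) ≤ ent (meas P (trR M)) + ent (meas P (trM M)) := by
  have h := ssa (τ := (meas P M).submatrix (Equiv.prodAssoc J D E) (Equiv.prodAssoc J D E))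
    ((meas_posSemidef P hM).submatrix _)
  have h1 : ptr ((meas P M).submatrix (Equiv.prodAssoc J D E) (Equiv.prodAssoc J D E)) =
      meas P (trR M) := by
    ext p q
    simp only [ptr, of_apply, submatrix_apply, meas_apply hP, blk_trR, Equiv.prodAssoc_apply,
      Matrix.mul_sum, Matrix.sum_mul, Matrix.trace_sum]
  have h2 : ptrB ((meas P M).submatrix (Equiv.prodAssoc J D E) (Equiv.prodAssoc J D E)) =
      meas P (trM M) := by
    ext p q
    simp only [ptrB, of_apply, submatrix_apply, meas_apply hP, blk_trM, Equiv.prodAssoc_apply,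
      Matrix.mul_sum, Matrix.sum_mul, Matrix.trace_sum]
  have h3 : ptr (meas P (trR M)) = measJ P (ptr (trR M)) := by
    ext p q
    rw [ptr_eq_sum_blk (trR M)]
    simp only [ptr, of_apply, meas_apply hP, measJ, Matrix.mul_sum, Matrix.sum_mul,
      Matrix.trace_sum]
  rw [ent_submatrix, h1, h2, h3] at h
  exact h

/-- Discarding a classical register does not increase entropy: apply strong subadditivity to the
state in which the register has been copied. -/
lemma ent_copy {N : Matrix (J × Y) (J × Y) ℂ} (hN : N.PosSemidef)
    (hd : ∀ p q, p.1 ≠ q.1 → N p q = 0) :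
    ent (of fun y y' : Y => ∑ j, N (j, y) (j, y')) ≤ ent N := by
  let W : Matrix ((Y × J) × J) (J × Y) ℂ :=
    of fun p q => if p.1.1 = q.2 ∧ p.1.2 = q.1 ∧ p.2 = q.1 then 1 else 0
  have hWsum : ∀ (f : J × Y → ℂ) p, ∑ x, W p x * f x =
      if p.1.2 = p.2 then f (p.2, p.1.1) else 0 := by
    rintro f ⟨⟨y, j⟩, k⟩
    simp only [W, of_apply, ite_mul, one_mul, zero_mul]
    by_cases h : j = k
    · subst h
      rw [Finset.sum_eq_single (j, y)]
      · simp
      · rintro ⟨j', y'⟩ - hne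
        rw [if_neg]
        rintro ⟨h1, h2, -⟩
        exact hne (by simp_all)
      · simp
    · rw [if_neg h, Finset.sum_eq_zero]
      rintro ⟨j', y'⟩ -
      rw [if_neg]
      rintro ⟨-, h2, h3⟩
      exact h (h2.trans h3.symm)
  have hWmul : ∀ (K : Matrix (J × Y) (J × Y) ℂ) p q, (W * K) p q =
      if p.1.2 = p.2 then K (p.2, p.1.1) q else 0 := fun K p q => hWsum (fun x => K x q) p
  have happ : ∀ p q, (W * N * Wᴴ) p q =
      if p.1.2 = p.2 then (if q.1.2 = q.2 then N (p.2, p.1.1) (q.2, q.1.1) else 0) else 0 := by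
    intro p q
    have e : (W * N * Wᴴ) p q = star (∑ x, W q x * star ((W * N) p x)) := by
      simp [Matrix.mul_apply, mul_comm]
    rw [e, hWsum, hWmul]
    split_ifs <;> simp
  have hW : Wᴴ * W = 1 := by
    ext p q
    have e : Wᴴ * W = (W * (1 : Matrix (J × Y) (J × Y) ℂ))ᴴ * W := by rw [Matrix.mul_one]
    rw [e, Matrix.mul_apply]
    simp only [conjTranspose_apply, hWmul]
    rw [Finset.sum_eq_single ((p.2, p.1), p.1)]
    · obtain ⟨j, y⟩ := p
      obtain ⟨j', y'⟩ := q
      simp [W, Matrix.one_apply, Prod.ext_iff, and_comm]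
    · rintro ⟨⟨y, j⟩, k⟩ - hne
      obtain ⟨j', y'⟩ := p
      by_cases h : j = k
      · subst h
        have : ¬ ((j, y) = (j', y')) := fun h => hne (by simp_all)
        simp [this]
      · simp [h]
    · simp
  have h := ssa (τ := W * N * Wᴴ) (hN.mul_mul_conjTranspose_same W)
  have h1 : ptr (W * N * Wᴴ) = N.submatrix (Equiv.prodComm Y J) (Equiv.prodComm Y J) := by
    ext ⟨y, j⟩ ⟨y', j'⟩
    simp only [ptr, of_apply, happ, submatrix_apply, Equiv.prodComm_apply, Prod.swap_prod_mk]
    by_cases hj : j = j'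
    · subst hj; simp
    · rw [hd (j, y) (j', y') hj]
      refine Finset.sum_eq_zero fun k _ => ?_
      split_ifs with h1 h2
      · exact absurd (h1.trans h2.symm) hj
      all_goals rfl
  have h2 : ptrB (W * N * Wᴴ) = N.submatrix (Equiv.prodComm Y J) (Equiv.prodComm Y J) := by
    ext ⟨y, j⟩ ⟨y', j'⟩
    simp only [ptrB, of_apply, happ, submatrix_apply, Equiv.prodComm_apply, Prod.swap_prod_mk]
    by_cases hj : j = j'
    · subst hj; simp
    · rw [hd (j, y) (j', y') hj]
      refine Finset.sum_eq_zero fun k _ => ?_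
      split_ifs with h1 h2
      · exact absurd (h1.symm.trans h2) hj
      all_goals rfl
  have h3 : ptr (ptr (W * N * Wᴴ)) = of fun y y' : Y => ∑ j, N (j, y) (j, y') := by
    rw [h1]
    ext y y'
    simp [ptr]
  rw [h3, h1, h2, ent_submatrix, ent_isometry _ hW] at h
  linarith

/-- Forgetting the outcome of the measurement of `A` gives back the marginal on `Y`, with
smaller entropy. -/
lemma ent_le_meas {P : J → Matrix A A ℂ} (hP : IsPVM P) {M : Matrix (A × Y) (A × Y) ℂ}
    (hM : M.PosSemidef) :
    ent (of fun y y' : Y => ∑ a, M (a, y) (a, y')) ≤ ent (meas P M) := by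
  have h := ent_copy (meas_posSemidef P hM) (fun p q hpq => by rw [meas_apply' hP, if_neg hpq])
  convert h using 3
  ext y y'
  simp only [meas_apply' hP, if_true]
  rw [← Matrix.trace_sum, ← Matrix.sum_mul, hP.sum, Matrix.one_mul]
  simp [Matrix.trace, blk]

/-- Entropy of a block-diagonal classical-quantum matrix `⨁ₐ r a • κ a`. -/
lemma ent_block (r : A → ℝ) (κ : A → Matrix E E ℂ) (hκ : ∀ a, (κ a).IsHermitian)
    (htr : ∀ a, (r a : ℂ) * (κ a).trace = r a) :
    ent (of fun p q : A × E => if p.1 = q.1 then (r p.1 : ℂ) * κ p.1 p.2 q.2 else 0) =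
      ∑ a, Real.negMulLog (r a) + ∑ a, r a * ent (κ a) := by
  have hex : ∀ a, ∃ (W : Matrix E E ℂ) (k : E → ℝ), Wᴴ * W = 1 ∧
      κ a = W * diagonal (fun c => (k c : ℂ)) * Wᴴ := by
    intro a
    refine ⟨(hκ a).eigenvectorUnitary, (hκ a).eigenvalues, ?_, ?_⟩
    · exact (mem_unitaryGroup_iff'.1 (hκ a).eigenvectorUnitary.2)
    · exact (hκ a).spectral_theorem
  choose W k hW hk using hex
  let V : Matrix (A × E) (A × E) ℂ :=
    of fun p q => if p.1 = q.1 then W p.1 p.2 q.2 else 0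
  have hV : Vᴴ * V = 1 := by
    ext ⟨a, c⟩ ⟨a', c'⟩
    have h := congrFun (congrFun (hW a) c) c'
    simp only [Matrix.mul_apply, conjTranspose_apply] at h
    simp only [Matrix.mul_apply, conjTranspose_apply, V, of_apply, Fintype.sum_prod_type]
    rw [Finset.sum_eq_single a]
    · by_cases haa : a = a'
      · subst haa
        simp only [if_true]
        rw [h]
        simp [Matrix.one_apply]
      · simp [haa]
    · intro b _ hb
      simp [hb]
    · simp
  have hM : (of fun p q : A × E => if p.1 = q.1 then (r p.1 : ℂ) * κ p.1 p.2 q.2 else 0) =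
      V * diagonal (fun p : A × E => ((r p.1 * k p.1 p.2 : ℝ) : ℂ)) * Vᴴ := by
    ext ⟨a, c⟩ ⟨a', c'⟩
    simp only [of_apply]
    rw [Matrix.mul_apply, Fintype.sum_prod_type, Finset.sum_eq_single a]
    · by_cases haa : a = a'
      · subst haa
        rw [if_pos rfl, hk a, Matrix.mul_apply, Finset.mul_sum]
        refine Finset.sum_congr rfl fun x _ => ?_
        simp only [Matrix.mul_diagonal, conjTranspose_apply, V, of_apply, if_true]
        push_cast
        ring
      · simp [V, haa, Ne.symm haa]
    · intro b _ hb
      refine Finset.sum_eq_zero fun x _ => ?_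
      simp [Matrix.mul_diagonal, V, Ne.symm hb]
    · simp
  rw [hM, ent_isometry V hV, ent_diagonal, Fintype.sum_prod_type, ← Finset.sum_add_distrib]
  refine Finset.sum_congr rfl fun a _ => ?_
  have he : ent (κ a) = ∑ c, Real.negMulLog (k a c) := by
    rw [hk a, ent_isometry _ (hW a), ent_diagonal]
  have ht : r a * ∑ c, k a c = r a := by
    have h1 := htr a
    rw [hk a, Matrix.trace_mul_comm, ← Matrix.mul_assoc, hW a, Matrix.one_mul,
      Matrix.trace_diagonal] at h1
    exact_mod_cast h1
  have ht' : (∑ c, k a c) * Real.negMulLog (r a) = Real.negMulLog (r a) := by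
    by_cases h0 : r a = 0
    · simp [h0]
    · rw [mul_right_eq_self₀.1 ht |>.resolve_right h0, one_mul]
  simp only [Real.negMulLog_mul]
  rw [Finset.sum_add_distrib, ← Finset.sum_mul, ht', ← Finset.mul_sum, he]

end Measure

/-! ### Labels and correlated measurements -/

section LW
variable {A B D E Y J : Type*} [Fintype A] [DecidableEq A] [Fintype B] [DecidableEq B]
  [Fintype D] [DecidableEq D] [Fintype E] [DecidableEq E] [Fintype Y] [DecidableEq Y]
  [Fintype J] [DecidableEq J]

/-- The measurement in the orthonormal basis `U` of the label `f`. -/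
def labelPVM (U : Matrix A A ℂ) (f : A → J) (j : J) : Matrix A A ℂ :=
  U * diagonal (fun a => if f a = j then (1 : ℂ) else 0) * Uᴴ

lemma trace_conj_diag {U : Matrix A A ℂ} (hU : Uᴴ * U = 1) (c : A → ℂ) :
    (U * diagonal c * Uᴴ).trace = ∑ a, c a := by
  rw [Matrix.trace_mul_comm, ← Matrix.mul_assoc, hU, Matrix.one_mul, trace_diagonal]

lemma labelPVM_isPVM {U : Matrix A A ℂ} (hU : Uᴴ * U = 1) (hU' : U * Uᴴ = 1) (f : A → J) :
    IsPVM (labelPVM U f) where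
  herm j := by
    rw [labelPVM, conjTranspose_mul, conjTranspose_mul, conjTranspose_conjTranspose,
      diagonal_conjTranspose, Matrix.mul_assoc]
    congr 3
    ext a
    simp [apply_ite]
  orth j k := by
    rw [labelPVM, labelPVM, diag_conj_mul hU]
    by_cases h : j = k
    · subst h
      rw [if_pos rfl]
      congr 3
      ext a
      split_ifs <;> simp
    · rw [if_neg h]
      have : (fun a => (if f a = j then (1 : ℂ) else 0) * (if f a = k then (1 : ℂ) else 0)) =
          fun _ => 0 := by
        ext a
        by_cases h1 : f a = j
        · have : f a ≠ k := fun h2 => h (h1.symm.trans h2)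
          simp [this]
        · simp [h1]
      rw [this, diagonal_zero, Matrix.mul_zero, Matrix.zero_mul]
  sum := by
    simp only [labelPVM]
    rw [← Matrix.sum_mul, ← Matrix.mul_sum]
    have : ∑ j, diagonal (fun a => if f a = j then (1 : ℂ) else 0) = 1 := by
      ext a b
      by_cases h : a = b
      · subst h
        simp [Matrix.sum_apply]
      · simp [Matrix.sum_apply, h]
    simp only [this, hU', Matrix.mul_one]

/-- If the blocks of `M` are `ρ_A * t i j`, with `ρ_A` (eigenvalues `r`) and all `t i j` (eigenvalues
`α · i j`) diagonal in the basis `U`, then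
`S(E|A)` is unchanged when `A` is replaced by a label `f` that determines these eigenvalues. -/
lemma ent_meas_label {U : Matrix A A ℂ} (hU : Uᴴ * U = 1) (hU' : U * Uᴴ = 1)
    (α : A → Matrix E E ℂ) (r : A → ℝ) (f : A → J) (κ : J → Matrix E E ℂ)
    (hκ : ∀ j, (κ j).IsHermitian) (hf : ∀ a, κ (f a) = α a)
    {M : Matrix (A × E) (A × E) ℂ} (hR : ptr M = U * diagonal (fun a => (r a : ℂ)) * Uᴴ)
    (hM : ∀ i j, blk M i j = ptr M * (U * diagonal (fun a => α a i j) * Uᴴ)) :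
    ent (meas (labelPVM U f) M) + ent (ptr M) =
      ent (measJ (labelPVM U f) (ptr M)) + ent M := by
  have hP := labelPVM_isPVM hU hU' f
  have hM' : ∀ i j, blk M i j = U * diagonal (fun a => (r a : ℂ) * α a i j) * Uᴴ := by
    intro i j
    rw [hM, hR, diag_conj_mul hU]
  have hinj : ∀ c d : A → ℂ, U * diagonal c * Uᴴ = U * diagonal d * Uᴴ → c = d := by
    intro c d h
    have h2 := congrArg (fun X => Uᴴ * X * U) h
    simp only [Matrix.mul_assoc] at h2
    simp only [hU, Matrix.mul_one] at h2
    simp only [← Matrix.mul_assoc, hU, Matrix.one_mul] at h2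
    exact diagonal_injective h2
  have htr : ∀ a, (r a : ℂ) * (α a).trace = r a := by
    have h := hR
    rw [ptr_eq_sum_blk] at h
    simp only [hM'] at h
    rw [← Matrix.sum_mul, ← Matrix.mul_sum] at h
    have e : ∑ y, diagonal (fun a => (r a : ℂ) * α a y y) =
        diagonal (fun a => ∑ y, (r a : ℂ) * α a y y) := by
      ext a b
      by_cases hab : a = b
      · subst hab; simp [Matrix.sum_apply]
      · simp [Matrix.sum_apply, hab]
    rw [e] at h
    intro a
    have := congrFun (hinj _ _ h) a
    rw [← Finset.mul_sum] at this
    exact this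
  have hα : ∀ a, (α a).IsHermitian := fun a => hf a ▸ hκ (f a)
  have e1 : ent (ptr M) = ∑ a, Real.negMulLog (r a) := by
    rw [hR, ent_isometry U hU, ent_diagonal]
  have e2 : ent M = ∑ a, Real.negMulLog (r a) + ∑ a, r a * ent (α a) := by
    rw [← ent_block r α hα htr]
    have hUE : (U ⊗ₖ (1 : Matrix E E ℂ))ᴴ * (U ⊗ₖ (1 : Matrix E E ℂ)) = 1 := by
      rw [kron_one_conjTranspose, ← kron_one_mul, hU, one_kronecker_one]
    refine Eq.trans ?_ (ent_isometry (U ⊗ₖ (1 : Matrix E E ℂ)) hUE _)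
    congr 1
    rw [kron_one_conjTranspose]
    have : ∀ i j, blk M i j = blk ((U ⊗ₖ (1 : Matrix E E ℂ)) *
        (of fun p q : A × E => if p.1 = q.1 then (r p.1 : ℂ) * α p.1 p.2 q.2 else 0) *
        (Uᴴ ⊗ₖ (1 : Matrix E E ℂ))) i j := by
      intro i j
      rw [blk_mul_kron, blk_kron_mul, hM']
      congr 2
    ext ⟨a, i⟩ ⟨b, j⟩
    exact congrFun (congrFun (this i j) a) b
  let p : J → ℝ := fun j => ∑ a, if f a = j then r a else 0
  have hpsum : ∀ j (c : A → ℂ) (z : ℂ), (∀ a, f a = j → c a = z) →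
      ∑ a, (if f a = j then (1 : ℂ) else 0) * ((r a : ℂ) * c a) = p j * z := by
    intro j c z h
    simp only [p]
    push_cast
    rw [Finset.sum_mul]
    refine Finset.sum_congr rfl fun a _ => ?_
    by_cases ha : f a = j
    · simp [ha, h a ha]
    · simp [ha]
  have e3 : measJ (labelPVM U f) (ptr M) = diagonal (fun j => (p j : ℂ)) := by
    ext j k
    simp only [measJ, of_apply]
    rw [trace_pvm hP, diagonal_apply]
    congr 1
    rw [hR, labelPVM, diag_conj_mul hU, trace_conj_diag hU]
    have := hpsum j (fun _ => 1) 1 (fun _ _ => rfl)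
    simpa using this
  have e4 : meas (labelPVM U f) M =
      of fun x y : J × E => if x.1 = y.1 then (p x.1 : ℂ) * κ x.1 x.2 y.2 else 0 := by
    ext x y
    rw [meas_apply' hP, of_apply]
    congr 1
    rw [hM', labelPVM, diag_conj_mul hU, trace_conj_diag hU]
    exact hpsum _ _ _ (fun a ha => by rw [← ha, hf])
  have htrJ : ∀ j, (p j : ℂ) * (κ j).trace = p j := by
    intro j
    have h1 := hpsum j (fun a => (α a).trace) (κ j).trace (fun a ha => by rw [← ha, hf])
    have h2 := hpsum j (fun _ => 1) 1 (fun _ _ => rfl)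
    rw [← h1]
    simp only [htr]
    simpa using h2
  have e5 : ∑ j, p j * ent (κ j) = ∑ a, r a * ent (α a) := by
    simp only [p, Finset.sum_mul]
    rw [Finset.sum_comm]
    refine Finset.sum_congr rfl fun a _ => ?_
    simp [ite_mul, hf]
  rw [e1, e2, e3, e4, ent_block p κ hκ htrJ, ent_diagonal, e5]
  ring

/-- If the measurements `P` on `A` and `Q` on `B` have perfectly correlated outcomes, the state of
the outcome of `P` together with `B ⊗ D` is isometric to the state of `B ⊗ D`. -/
lemma ent_meas_of_corr {P : J → Matrix A A ℂ} {Q : J → Matrix B B ℂ} (hP : IsPVM P) (hQ : IsPVM Q)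
    {μ : Matrix ((A × B) × D) ((A × B) × D) ℂ} (hμ : μ.IsHermitian)
    (h : ∀ j, ((P j ⊗ₖ (1 : Matrix B B ℂ)) ⊗ₖ (1 : Matrix D D ℂ)) * μ =
      (((1 : Matrix A A ℂ) ⊗ₖ Q j) ⊗ₖ (1 : Matrix D D ℂ)) * μ) :
    ent (meas P (of fun p q : A × (D × B) => μ ((p.1, p.2.2), p.2.1) ((q.1, q.2.2), q.2.1))) =
      ent (of fun p q : B × D => ∑ a, μ ((a, p.1), p.2) ((a, q.1), q.2)) := by
  rw [← ent_isplit hQ, ← ent_submatrix (Equiv.prodAssoc J D B).symm]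
  congr 1
  have h' : ∀ j, μ * ((P j ⊗ₖ (1 : Matrix B B ℂ)) ⊗ₖ (1 : Matrix D D ℂ)) =
      μ * (((1 : Matrix A A ℂ) ⊗ₖ Q j) ⊗ₖ (1 : Matrix D D ℂ)) := by
    intro j
    have := congrArg conjTranspose (h j)
    simpa only [conjTranspose_mul, conjTranspose_kronecker, conjTranspose_one, hP.herm, hQ.herm,
      hμ.eq] using this
  ext ⟨j, d, b⟩ ⟨k, d', b'⟩
  have key : ((P j ⊗ₖ (1 : Matrix B B ℂ)) ⊗ₖ (1 : Matrix D D ℂ)) * μ *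
      ((P k ⊗ₖ (1 : Matrix B B ℂ)) ⊗ₖ (1 : Matrix D D ℂ)) =
      (((1 : Matrix A A ℂ) ⊗ₖ Q j) ⊗ₖ (1 : Matrix D D ℂ)) * μ *
      (((1 : Matrix A A ℂ) ⊗ₖ Q k) ⊗ₖ (1 : Matrix D D ℂ)) := by
    rw [h, Matrix.mul_assoc, h', ← Matrix.mul_assoc]
  have key2 : ∑ a, (((P j ⊗ₖ (1 : Matrix B B ℂ)) ⊗ₖ (1 : Matrix D D ℂ)) * μ *
      ((P k ⊗ₖ (1 : Matrix B B ℂ)) ⊗ₖ (1 : Matrix D D ℂ))) ((a, b), d) ((a, b'), d') =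
      ∑ a, ((((1 : Matrix A A ℂ) ⊗ₖ Q j) ⊗ₖ (1 : Matrix D D ℂ)) * μ *
      (((1 : Matrix A A ℂ) ⊗ₖ Q k) ⊗ₖ (1 : Matrix D D ℂ))) ((a, b), d) ((a, b'), d') := by
    rw [key]
  rw [meas_apply hP, submatrix_apply, isplit_apply hQ]
  simp only [Matrix.mul_apply, Fintype.sum_prod_type, kroneckerMap_apply, Matrix.one_apply,
    mul_ite, ite_mul, mul_one, one_mul, mul_zero, zero_mul, Finset.sum_ite_eq, Finset.sum_ite_eq',
    Finset.mem_univ, if_true] at key2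
  simp only [Matrix.trace, diag_apply, Matrix.mul_apply, blk, of_apply,
    Equiv.prodAssoc_symm_apply]
  rw [key2]
  have s1 : ∀ (a : A) (G : A → B → ℂ),
      (∑ x, ∑ y, if x = a then G x y else 0) = ∑ y, G a y := by
    intro a G
    rw [Finset.sum_comm]
    simp
  have s2 : ∀ (a : A) (G : A → B → ℂ),
      (∑ x, ∑ y, if a = x then G x y else 0) = ∑ y, G a y := by
    intro a G
    rw [Finset.sum_comm]
    simp
  simp only [s1, s2]
  rw [Finset.sum_comm]
  refine Finset.sum_congr rfl fun y _ => ?_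
  rw [← Finset.sum_mul, Finset.sum_comm]
  simp only [Finset.mul_sum]

end LW

/-! ### The four-party inequality -/

section Final
variable {A B D E Y J : Type*} [Fintype A] [DecidableEq A] [Fintype B] [DecidableEq B]
  [Fintype D] [DecidableEq D] [Fintype E] [DecidableEq E] [Fintype Y] [DecidableEq Y]
  [Fintype J] [DecidableEq J]

/-- If commuting systems on `A` and `B` act equally on `ω`, then so do their joint spectral
projections. -/
lemma label_corr {UA : Matrix A A ℂ} {UB : Matrix B B ℂ} (hA : UAᴴ * UA = 1) (hA' : UA * UAᴴ = 1)
    (hB : UBᴴ * UB = 1) (hB' : UB * UBᴴ = 1) (α : A → Matrix E E ℂ) (β : B → Matrix E E ℂ)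
    {ω : Matrix (A × B) (A × B) ℂ}
    (h : ∀ i j, ((UA * diagonal (fun a => α a i j) * UAᴴ) ⊗ₖ (1 : Matrix B B ℂ)) * ω =
      ((1 : Matrix A A ℂ) ⊗ₖ (UB * diagonal (fun b => β b i j) * UBᴴ)) * ω)
    (f : A → J) (g : B → J) (hfg : ∀ a b, f a = g b ↔ α a = β b) (j : J) :
    (labelPVM UA f j ⊗ₖ (1 : Matrix B B ℂ)) * ω =
      ((1 : Matrix A A ℂ) ⊗ₖ labelPVM UB g j) * ω := by
  have eA : ∀ c : A → ℂ, (UA * diagonal c * UAᴴ) ⊗ₖ (1 : Matrix B B ℂ) =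
      (UA ⊗ₖ UB) * diagonal (fun p : A × B => c p.1) * (UA ⊗ₖ UB)ᴴ := by
    intro c
    have : diagonal (fun p : A × B => c p.1) = diagonal c ⊗ₖ (1 : Matrix B B ℂ) := by
      rw [← diagonal_one, diagonal_kronecker_diagonal]
      simp
    rw [this, conjTranspose_kronecker, ← mul_kronecker_mul, ← mul_kronecker_mul, Matrix.mul_one, hB']
  have eB : ∀ c : B → ℂ, (1 : Matrix A A ℂ) ⊗ₖ (UB * diagonal c * UBᴴ) =
      (UA ⊗ₖ UB) * diagonal (fun p : A × B => c p.2) * (UA ⊗ₖ UB)ᴴ := by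
    intro c
    have : diagonal (fun p : A × B => c p.2) = (1 : Matrix A A ℂ) ⊗ₖ diagonal c := by
      rw [← diagonal_one, diagonal_kronecker_diagonal]
      simp
    rw [this, conjTranspose_kronecker, ← mul_kronecker_mul, ← mul_kronecker_mul, Matrix.mul_one, hA']
  have hW : (UA ⊗ₖ UB)ᴴ * (UA ⊗ₖ UB) = 1 := by
    rw [conjTranspose_kronecker, ← mul_kronecker_mul, hA, hB, one_kronecker_one]
  set W := UA ⊗ₖ UB
  have h0 : ∀ p q i j, α p.1 i j * (Wᴴ * ω) p q = β p.2 i j * (Wᴴ * ω) p q := by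
    intro p q i j
    have h1 := h i j
    rw [eA, eB] at h1
    have h2 := congrArg (fun X => Wᴴ * X) h1
    simp only [Matrix.mul_assoc] at h2
    simp only [← Matrix.mul_assoc Wᴴ W, hW, Matrix.one_mul] at h2
    have h3 := congrFun (congrFun h2 p) q
    rwa [diagonal_mul, diagonal_mul] at h3
  rw [labelPVM, labelPVM, eA, eB, Matrix.mul_assoc, Matrix.mul_assoc, Matrix.mul_assoc,
    Matrix.mul_assoc]
  congr 1
  ext p q
  rw [diagonal_mul, diagonal_mul]
  by_cases hz : (Wᴴ * ω) p q = 0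
  · rw [hz, mul_zero, mul_zero]
  · have : f p.1 = g p.2 := by
      rw [hfg]
      ext i j
      exact mul_right_cancel₀ hz (h0 p q i j)
    rw [this]

/-- An operator identity on the marginal `ω = Tr_D μ` lifts to `μ`. -/
lemma lift_corr {μ : Matrix (Y × D) (Y × D) ℂ} (hμ : μ.PosSemidef) {K L : Matrix Y Y ℂ}
    (hK : Kᴴ = K) (hL : Lᴴ = L) (h : K * ptr μ = L * ptr μ) :
    (K ⊗ₖ (1 : Matrix D D ℂ)) * μ = (L ⊗ₖ (1 : Matrix D D ℂ)) * μ := by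
  have hp := (ptr_posSemidef hμ).isHermitian.eq
  have h1 : ptr μ * (K - L) = 0 := by
    have := congrArg conjTranspose h
    rw [conjTranspose_mul, conjTranspose_mul, hK, hL, hp] at this
    rw [Matrix.mul_sub, this, sub_self]
  have h2 := congrArg conjTranspose (mul_kron_eq_zero hμ h1)
  rw [conjTranspose_mul, kron_one_conjTranspose, hμ.isHermitian.eq, conjTranspose_sub, hK, hL,
    show (K - L) ⊗ₖ (1 : Matrix D D ℂ) = K ⊗ₖ (1 : Matrix D D ℂ) - L ⊗ₖ (1 : Matrix D D ℂ) by
      ext p q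
      simp [kroneckerMap_apply, sub_mul], Matrix.sub_mul, conjTranspose_zero] at h2
  exact sub_eq_zero.1 h2

/-- The constrained inequality in terms of a four-party state on `A, B, D, E`: if
`I(B;E|A) = I(A;E|B) = I(A;B|D) = 0`, then `S(DE) + S(A) ≤ S(D) + S(AE)`. -/
theorem four_party {σ : Matrix (((A × B) × D) × E) (((A × B) × D) × E) ℂ} (hσ : σ.PosSemidef)
    (hA : ent (ptrB σ) + ent (ptr (ptr (ptrB σ))) = ent (ptr (ptrB σ)) + ent (ptrB (ptrB σ)))
    (hB : ent (ptrB σ) +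
        ent (ptr (ptr ((ptrB σ).submatrix (sw12 A B E) (sw12 A B E)))) =
      ent (ptr (ptrB σ)) + ent (ptrB ((ptrB σ).submatrix (sw12 A B E) (sw12 A B E))))
    (hI : ent (ptrB (ptr σ)) +
        ent (of fun p q : B × D => ∑ a, ptr σ ((a, p.1), p.2) ((a, q.1), q.2)) =
      ent (ptr σ) + ent (of fun d d' : D => ∑ p, ptr σ (p, d) (p, d'))) :
    ent (of fun p q : D × E => ∑ x, σ ((x, p.1), p.2) ((x, q.1), q.2)) +
        ent (ptr (ptr (ptrB σ))) ≤
      ent (of fun d d' : D => ∑ p, ptr σ (p, d) (p, d')) + ent (ptrB (ptrB σ)) := by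
  classical
  have hτ : (ptrB σ).PosSemidef := ptrB_posSemidef hσ
  have hμ : (ptr σ).PosSemidef := ptr_posSemidef hσ
  obtain ⟨t, t', ht, ht', hC, hC', hω, hRC, hblk⟩ := double_markov hτ hA hB
  have hRh : (ptr (ptr (ptrB σ))).IsHermitian :=
    (ptr_posSemidef (ptr_posSemidef hτ)).isHermitian
  obtain ⟨UA, α, r, hUA, hUA', hα, htα, hRr⟩ := simDiag_system t _ ht hRh hC hRC
  obtain ⟨UB, β, -, hUB, hUB', hβ, htβ, -⟩ :=
    simDiag_system t' (1 : Matrix B B ℂ) ht' isHermitian_one hC' (by simp)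
  -- The labels are the joint eigenvalues `(i, j) ↦ α a i j` themselves, as matrices on `E`.
  let S : Finset (Matrix E E ℂ) := Finset.univ.image α ∪ Finset.univ.image β
  let f : A → S := fun a => ⟨α a, by simp [S]⟩
  let g : B → S := fun b => ⟨β b, by simp [S]⟩
  let κ : S → Matrix E E ℂ := fun j => j.1
  have hκ : ∀ j, (κ j).IsHermitian := by
    rintro ⟨j, hj⟩
    rcases Finset.mem_union.1 hj with h | h
    · obtain ⟨a, -, rfl⟩ := Finset.mem_image.1 h
      exact hα a
    · obtain ⟨b, -, rfl⟩ := Finset.mem_image.1 h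
      exact hβ b
  have hP := labelPVM_isPVM hUA hUA' f
  have hQ := labelPVM_isPVM hUB hUB' g
  have hcorr : ∀ j, ((labelPVM UA f j ⊗ₖ (1 : Matrix B B ℂ)) ⊗ₖ (1 : Matrix D D ℂ)) * ptr σ =
      (((1 : Matrix A A ℂ) ⊗ₖ labelPVM UB g j) ⊗ₖ (1 : Matrix D D ℂ)) * ptr σ := by
    intro j
    apply lift_corr hμ
    · rw [kron_one_conjTranspose, hP.herm]
    · rw [conjTranspose_kronecker, conjTranspose_one, hQ.herm]
    · apply label_corr hUA hUA' hUB hUB' α β ?_ f g (fun a b => Subtype.ext_iff) j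
      intro i k
      rw [← htα, ← htβ, ← ptr_ptrB]
      exact hω i k
  -- `M₁` is the marginal on `A ⊗ (D ⊗ B)`, `M₂` the marginal on `A ⊗ (D ⊗ E)`.
  let e₁ : A × (D × B) ≃ (A × B) × D :=
    { toFun := fun p => ((p.1, p.2.2), p.2.1)
      invFun := fun p => (p.1.1, (p.2, p.1.2))
      left_inv := fun _ => rfl
      right_inv := fun _ => rfl }
  let M₁ : Matrix (A × (D × B)) (A × (D × B)) ℂ :=
    of fun p q => ptr σ ((p.1, p.2.2), p.2.1) ((q.1, q.2.2), q.2.1)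
  have hM₁e : M₁ = (ptr σ).submatrix e₁ e₁ := rfl
  have hM₁ : M₁.PosSemidef := hM₁e ▸ hμ.submatrix e₁
  let e₂ : (A × (D × E)) × B ≃ ((A × B) × D) × E :=
    { toFun := fun p => (((p.1.1, p.2), p.1.2.1), p.1.2.2)
      invFun := fun p => ((p.1.1.1, (p.1.2, p.2)), p.1.1.2)
      left_inv := fun _ => rfl
      right_inv := fun _ => rfl }
  let M₂ : Matrix (A × (D × E)) (A × (D × E)) ℂ := ptr (σ.submatrix e₂ e₂)
  have hM₂ : M₂.PosSemidef := ptr_posSemidef (hσ.submatrix e₂)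
  have r1 : trR M₁ = ptrB (ptr σ) := rfl
  have r2 : trR M₂ = ptrB (ptr σ) := by
    ext p q
    simp only [trR, M₂, ptr, ptrB, of_apply, submatrix_apply]
    rw [Finset.sum_comm]
    rfl
  have r3 : trM M₂ = ptrB (ptrB σ) := by
    ext p q
    simp only [trM, M₂, ptr, ptrB, of_apply, submatrix_apply]
    rw [Finset.sum_comm]
    rfl
  have r4 : ptr (ptrB (ptrB σ)) = ptr (ptr (ptrB σ)) := ptr_ptrB _
  have r5 : ptr (ptrB (ptr σ)) = ptr (ptr (ptrB σ)) := by rw [ptr_ptrB, ptr_ptrB]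
  have r6 : ent M₁ = ent (ptr σ) := by rw [hM₁e, ent_submatrix]
  have r7 : (of fun y y' : D × E => ∑ a, M₂ (a, y) (a, y')) =
      of fun p q : D × E => ∑ x, σ ((x, p.1), p.2) ((x, q.1), q.2) := by
    ext p q
    simp only [of_apply, M₂, ptr, submatrix_apply, Fintype.sum_prod_type]
    rfl
  have i1 := ssa_isplit hP hM₁
  rw [r1, r6, ent_meas_of_corr hP hQ hμ.isHermitian hcorr] at i1
  have i2 := ssa_meas hP hM₂
  rw [r2, r3, r5] at i2
  have i3 := ent_le_meas hP hM₂
  rw [r7] at i3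
  have i4 := ent_meas_label hUA hUA' α r f κ hκ (fun a => rfl) (M := ptrB (ptrB σ))
    (by rw [r4]; exact hRr) (fun i j => by rw [hblk, r4, htα])
  rw [r4] at i4
  linarith

end Final

/-! ### Purification and conclusion -/

section Purify
variable {P Q : Type*} [Fintype P] [DecidableEq P] [Fintype Q] [DecidableEq Q]

/-- Complementary marginals of a pure state have equal entropy. -/
lemma ent_compl (X : Matrix P Q ℂ) :
    ent (of fun p p' => ∑ q, X p q * star (X p' q)) =
      ent (of fun q q' => ∑ p, X p q * star (X p q')) := by
  have h1 : (of fun p p' => ∑ q, X p q * star (X p' q)) = X * Xᴴ := by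
    ext p p'
    simp [Matrix.mul_apply]
  have h2 : (of fun q q' => ∑ p, X p q * star (X p q')) = (Xᴴ * X)ᵀ := by
    ext p p'
    simp [Matrix.mul_apply, mul_comm]
  rw [h1, h2, ent_transpose, ent_mul_comm]

end Purify

/-- **Theorem 1″ (3).** If `S(B|A)+S(B|CD) = 0`, `S(A|B)+S(A|CD) = 0` and
`I(A;B|D) = 0`, then `S(D)+S(CD) ≥ S(AB)+S(ABC)`. -/
theorem constrained_inequality''_three
    {A B C D : Type*} [Fintype A] [DecidableEq A] [Fintype B] [DecidableEq B]
    [Fintype C] [DecidableEq C] [Fintype D] [DecidableEq D]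
    (ρ : Matrix (A × B × C × D) (A × B × C × D) ℂ) (hρ : IsState ρ)
    (h1 : (SAB ρ - SA ρ) + (SBCD ρ - SCD ρ) = 0)
    (h2 : (SAB ρ - SB ρ) + (SACD ρ - SCD ρ) = 0)
    (h3 : SAD ρ + SBD ρ - SABD ρ - SD ρ = 0) :
    SAB ρ + SABC ρ ≤ SD ρ + SCD ρ := by
  have hH : ∀ p q, star (ρ p q) = ρ q p := fun p q => hρ.1.isHermitian.apply q p
  obtain ⟨X, hX⟩ : ∃ X : Matrix (A × B × C × D) (A × B × C × D) ℂ, ρ = X * Xᴴ := by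
    obtain ⟨s, hs, hs'⟩ := exists_sqrt hρ.1
    exact ⟨s, by rw [hs.isHermitian.eq, hs']⟩
  let E := A × B × C × D
  have hρX : ∀ p q, ρ p q = ∑ e : E, X p e * star (X q e) := by
    intro p q
    rw [hX, Matrix.mul_apply]
    rfl
  -- The purification of `ρ` by `E`, with `C` traced out.
  let Z : Matrix (((A × B) × D) × E) C ℂ := of fun p c => X (p.1.1.1, p.1.1.2, c, p.1.2) p.2
  let σ : Matrix (((A × B) × D) × E) (((A × B) × D) × E) ℂ := Z * Zᴴ
  have hσ : σ.PosSemidef := posSemidef_self_mul_conjTranspose Z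
  have hσa : ∀ a b d e a' b' d' e', σ (((a, b), d), e) (((a', b'), d'), e') =
      ∑ c, X (a, b, c, d) e * star (X (a', b', c, d') e') := by
    intros
    rfl
  have hl : Real.log 2 ≠ 0 := (Real.log_pos one_lt_two).ne'
  have sAB : SAB ρ * Real.log 2 = ent (ptr (ptrB σ)) := by
    rw [SAB, vNEntropy_eq (by ext p q; simp only [conjTranspose_apply, of_apply, star_sum, hH]),
      div_mul_cancel₀ _ hl]
    congr 1
    ext ⟨a, b⟩ ⟨a', b'⟩
    simp only [ptr, ptrB, of_apply, hσa, hρX]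
    rw [Finset.sum_congr rfl fun c _ => Finset.sum_comm, Finset.sum_comm]
    exact Finset.sum_congr rfl fun e _ => Finset.sum_comm
  have sA : SA ρ * Real.log 2 = ent (ptr (ptr (ptrB σ))) := by
    rw [SA, vNEntropy_eq (by ext p q; simp only [conjTranspose_apply, of_apply, star_sum, hH]),
      div_mul_cancel₀ _ hl]
    congr 1
    ext a a'
    simp only [ptr, ptrB, of_apply, hσa, hρX]
    refine Finset.sum_congr rfl fun b _ => ?_
    rw [Finset.sum_congr rfl fun c _ => Finset.sum_comm, Finset.sum_comm]
    exact Finset.sum_congr rfl fun e _ => Finset.sum_comm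
  have sB : SB ρ * Real.log 2 =
      ent (ptr (ptr ((ptrB σ).submatrix (sw12 A B E) (sw12 A B E)))) := by
    rw [SB, vNEntropy_eq (by ext p q; simp only [conjTranspose_apply, of_apply, star_sum, hH]),
      div_mul_cancel₀ _ hl]
    congr 1
    ext b b'
    simp only [ptr, ptrB, of_apply, submatrix_apply, sw12, Equiv.coe_fn_mk, hσa, hρX]
    refine Finset.sum_congr rfl fun a _ => ?_
    rw [Finset.sum_congr rfl fun c _ => Finset.sum_comm, Finset.sum_comm]
    exact Finset.sum_congr rfl fun e _ => Finset.sum_comm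
  have sD : SD ρ * Real.log 2 = ent (of fun d d' : D => ∑ p, ptr σ (p, d) (p, d')) := by
    rw [SD, vNEntropy_eq (by ext p q; simp only [conjTranspose_apply, of_apply, star_sum, hH]),
      div_mul_cancel₀ _ hl]
    congr 1
    ext d d'
    simp only [ptr, of_apply, Fintype.sum_prod_type (α₁ := A) (α₂ := B), hσa, hρX]
    exact Finset.sum_congr rfl fun a _ => Finset.sum_congr rfl fun b _ => Finset.sum_comm
  have sAD : SAD ρ * Real.log 2 = ent (ptrB (ptr σ)) := by
    rw [SAD, vNEntropy_eq (by ext p q; simp only [conjTranspose_apply, of_apply, star_sum, hH]),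
      div_mul_cancel₀ _ hl]
    congr 1
    ext ⟨a, d⟩ ⟨a', d'⟩
    simp only [ptr, ptrB, of_apply, hσa, hρX]
    exact Finset.sum_congr rfl fun b _ => Finset.sum_comm
  have sBD : SBD ρ * Real.log 2 =
      ent (of fun p q : B × D => ∑ a, ptr σ ((a, p.1), p.2) ((a, q.1), q.2)) := by
    rw [SBD, vNEntropy_eq (by ext p q; simp only [conjTranspose_apply, of_apply, star_sum, hH]),
      div_mul_cancel₀ _ hl]
    congr 1
    ext ⟨b, d⟩ ⟨b', d'⟩
    simp only [ptr, of_apply, hσa, hρX]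
    exact Finset.sum_congr rfl fun a _ => Finset.sum_comm
  have sABD : SABD ρ * Real.log 2 = ent (ptr σ) := by
    rw [SABD, vNEntropy_eq (by ext p q; simp only [conjTranspose_apply, of_apply, star_sum, hH]),
      div_mul_cancel₀ _ hl, ← ent_submatrix (Equiv.prodAssoc A B D)]
    congr 1
    ext ⟨⟨a, b⟩, d⟩ ⟨⟨a', b'⟩, d'⟩
    simp only [ptr, of_apply, submatrix_apply, Equiv.prodAssoc_apply, hσa, hρX]
    exact Finset.sum_comm
  have sCD : SCD ρ * Real.log 2 = ent (ptrB σ) := by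
    rw [SCD, vNEntropy_eq (by ext p q; simp only [conjTranspose_apply, of_apply, star_sum, hH]),
      div_mul_cancel₀ _ hl]
    convert ent_compl (of fun (p : C × D) (q : (A × B) × E) =>
      X (q.1.1, q.1.2, p.1, p.2) q.2) using 2
    · ext p q
      simp only [of_apply, hρX, Fintype.sum_prod_type (α₁ := A × B) (α₂ := E),
        Fintype.sum_prod_type (α₁ := A) (α₂ := B)]
    · ext p q
      simp only [ptrB, of_apply, Fintype.sum_prod_type (α₁ := C) (α₂ := D), hσa]
      exact Finset.sum_comm
  have sBCD : SBCD ρ * Real.log 2 = ent (ptrB (ptrB σ)) := by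
    rw [SBCD, vNEntropy_eq (by ext p q; simp only [conjTranspose_apply, of_apply, star_sum, hH]),
      div_mul_cancel₀ _ hl]
    convert ent_compl (of fun (p : B × C × D) (q : A × E) =>
      X (q.1, p.1, p.2.1, p.2.2) q.2) using 2
    · ext p q
      simp only [of_apply, hρX, Fintype.sum_prod_type (α₁ := A) (α₂ := E)]
    · ext p q
      simp only [ptrB, of_apply, Fintype.sum_prod_type (α₁ := C) (α₂ := D),
        Fintype.sum_prod_type (α₁ := B) (α₂ := C × D), hσa]
      exact Finset.sum_congr rfl fun b _ => Finset.sum_comm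
  have sACD : SACD ρ * Real.log 2 =
      ent (ptrB ((ptrB σ).submatrix (sw12 A B E) (sw12 A B E))) := by
    rw [SACD, vNEntropy_eq (by ext p q; simp only [conjTranspose_apply, of_apply, star_sum, hH]),
      div_mul_cancel₀ _ hl]
    convert ent_compl (of fun (p : A × C × D) (q : B × E) =>
      X (p.1, q.1, p.2.1, p.2.2) q.2) using 2
    · ext p q
      simp only [of_apply, hρX, Fintype.sum_prod_type (α₁ := B) (α₂ := E)]
    · ext p q
      simp only [ptrB, of_apply, submatrix_apply, sw12, Equiv.coe_fn_mk,
        Fintype.sum_prod_type (α₁ := C) (α₂ := D),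
        Fintype.sum_prod_type (α₁ := A) (α₂ := C × D), hσa]
      exact Finset.sum_congr rfl fun b _ => Finset.sum_comm
  have sABC : SABC ρ * Real.log 2 =
      ent (of fun p q : D × E => ∑ x, σ ((x, p.1), p.2) ((x, q.1), q.2)) := by
    rw [SABC, vNEntropy_eq (by ext p q; simp only [conjTranspose_apply, of_apply, star_sum, hH]),
      div_mul_cancel₀ _ hl]
    convert ent_compl (of fun (p : A × B × C) (q : D × E) =>
      X (p.1, p.2.1, p.2.2, q.1) q.2) using 2
    · ext p q
      simp only [of_apply, hρX, Fintype.sum_prod_type (α₁ := D) (α₂ := E)]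
    · ext p q
      simp only [of_apply, Fintype.sum_prod_type (α₁ := A) (α₂ := B),
        Fintype.sum_prod_type (α₁ := B) (α₂ := C),
        Fintype.sum_prod_type (α₁ := A) (α₂ := B × C), hσa]
  have key := four_party hσ
    (by rw [← sCD, ← sA, ← sAB, ← sBCD]; linear_combination (-Real.log 2) * h1)
    (by rw [← sCD, ← sB, ← sAB, ← sACD]; linear_combination (-Real.log 2) * h2)
    (by rw [← sAD, ← sBD, ← sABD, ← sD]; linear_combination Real.log 2 * h3)
  rw [← sABC, ← sA, ← sD, ← sBCD] at key
  have hl' := Real.log_pos one_lt_two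
  refine le_of_mul_le_mul_right ?_ hl'
  linear_combination key + Real.log 2 * h1
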